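/- arXiv:1210.2359 — 3 statements merged into one kernel-verified Lean document; each statement's English description precedes it below -/
import Mathlib

section
/- For every x ∈ (a,b), the boundary values of the derivative of the logarithmic potential satisfy g′₊(x) + g′₋(x) = 0, where g′_±(x) := lim_{ε→0⁺} g′(x ± iε). -/
open Complex Real Filter Topology MeasureTheory

/-!
The density is a mixture of arcsine laws. Since `d/dt arcsin (t / A) = 1 / √(A² - t²)` for `t < A`,
and `arcsin (t / A)` stays at `π / 2` for `t ≥ A`, taking `A = 2√(s - s²)` gives, on all of `(0, 1)`
(intervals with density `1 / c` included),

  `μ(s) = 2 / (πc) ∫₀ᶜ 1_{t² < 4(s - s²)} / √(4(s - s²) - t²) dt`.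

For each `t` the integrand, times `2 / π`, is the arcsine law on `|s - 1/2| < √(1 - t²) / 2`, whose
Cauchy transform at `z` in the upper half-plane is `1 / (i S_t(z))`, where `S_t(z)` is the square
root with positive real part of `(1 - t²) / 4 - (z - 1/2)²` (`arcsine_transform`). Hence
`g′(z) = (1 / c) ∫₀ᶜ dt / (i S_t(z))` in the upper half-plane (`density_cauchy_eq_integral`).

For `x ∈ (a, b)` and `t ≤ c` the number `(1 - t²) / 4 - (x - 1/2)²` is positive and bounded away
from `0`, so dominated convergence gives `g′₊(x) = -(i / c) ∫₀ᶜ dt / S_t(x)`, which is purely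
imaginary (`tendsto_boundary`). As `g′(z̄)` is the conjugate of `g′(z)`, the lower boundary value
is the conjugate of the upper one, and the two cancel.
-/

/-! ### Arcsine laws and their Cauchy transforms -/

/-- The density as a superposition over `t` of the unnormalised arcsine densities. No case split
on `c ≤ A` is needed: for `t ≥ A` the integrand is `0` by the junk values `√(negative) = 0` and
`0⁻¹ = 0`, which matches the fact that `Real.arcsin` is constant beyond `1`. -/
lemma arcsin_layer {A c : ℝ} (hA : 0 < A) (hc : 0 < c) :
    IntegrableOn (fun t => (√(A ^ 2 - t ^ 2))⁻¹) (Set.Ioc 0 c) ∧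
      ∫ t in Set.Ioc 0 c, (√(A ^ 2 - t ^ 2))⁻¹ = Real.arcsin (c / A) := by
  have hcont : ContinuousOn (fun t : ℝ => Real.arcsin (t / A)) (Set.Icc 0 c) := by fun_prop
  have hderiv : ∀ t ∈ Set.Ioo 0 c, HasDerivWithinAt (fun t : ℝ => Real.arcsin (t / A))
      ((√(A ^ 2 - t ^ 2))⁻¹) (Set.Ioi t) t := by
    intro t ht
    have h1 : t / A ≠ -1 := by
      have : 0 < t / A := div_pos ht.1 hA
      linarith
    have h2 : HasDerivWithinAt (fun t : ℝ => t / A) (1 / A) (Set.Ioi t) t :=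
      ((hasDerivAt_id t).div_const A).hasDerivWithinAt
    have h3 := (Real.hasDerivWithinAt_arcsin_Ici h1).comp t h2 (fun y hy =>
      div_le_div_of_nonneg_right (le_of_lt hy) hA.le)
    refine h3.congr_deriv ?_
    have : A ^ 2 - t ^ 2 = A ^ 2 * (1 - (t / A) ^ 2) := by field_simp
    rw [this, Real.sqrt_mul (by positivity), Real.sqrt_sq hA.le, mul_inv]
    ring
  have hint := intervalIntegral.integrableOn_deriv_right_of_nonneg hcont hderiv
    (fun t _ => by positivity)
  refine ⟨hint, ?_⟩
  have := intervalIntegral.integral_eq_sub_of_hasDeriv_right_of_le hc.le hcont hderiv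
    ((intervalIntegrable_iff_integrableOn_Ioc_of_le hc.le).2 hint)
  rw [intervalIntegral.integral_of_le hc.le] at this
  simpa using this

/-- Residue computation on the unit circle `ζ = exp (iθ)`. The two poles `(iw ± S) / ρ` have product
`-1`, and `Re S > 0`, `Im w > 0` force the one with the plus sign to lie inside. -/
lemma circle_integral_aux {w S : ℂ} {ρ : ℝ} (hρ : 0 < ρ) (hw : 0 < w.im) (hS : 0 < S.re)
    (hSw : S ^ 2 = ρ ^ 2 - w ^ 2) :
    ∫ θ in (0:ℝ)..2 * π, (w - ρ * Real.sin θ)⁻¹ = 2 * π * (-I / S) := by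
  have hρ' : (ρ : ℂ) ≠ 0 := by exact_mod_cast hρ.ne'
  have hS0 : S ≠ 0 := by rintro rfl; simp at hS
  set p : ℂ := (I * w + S) / ρ with hp
  set q : ℂ := (I * w - S) / ρ with hq
  have hpq : p * q = -1 := by
    rw [hp, hq]; field_simp
    linear_combination (-1 : ℂ) * hSw + w ^ 2 * I_sq
  have hlt : ‖p‖ < ‖q‖ := by
    rw [hp, hq, norm_div, norm_div]
    refine div_lt_div_of_pos_right ?_ (by simpa using hρ.ne')
    rw [← sq_lt_sq₀ (norm_nonneg _) (norm_nonneg _), ← normSq_eq_norm_sq, ← normSq_eq_norm_sq]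
    -- The difference of the squared moduli is a positive multiple of
    -- `S.re * w.im - S.im * w.re`, and `Im (S²) = -Im (w²)` makes both terms nonnegative.
    have him : S.re * S.im = - (w.re * w.im) := by
      have := congrArg Complex.im hSw
      simp [pow_two] at this
      linarith
    have key : w.re * S.im * S.re ≤ 0 := by
      have : w.re * S.im * S.re = - (w.re ^ 2 * w.im) := by linear_combination w.re * him
      rw [this]; have := mul_nonneg (sq_nonneg w.re) hw.le; linarith
    have key2 : w.re * S.im ≤ 0 := by
      by_contra! h
      have := mul_pos h hS
      linarith
    have key3 := mul_pos hw hS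
    simp [normSq_apply]
    nlinarith
  have hprod : ‖p‖ * ‖q‖ = 1 := by rw [← norm_mul, hpq]; simp
  have hp1 : ‖p‖ < 1 := by
    by_contra! h
    nlinarith
  have hq1 : 1 < ‖q‖ := by
    by_contra! h
    nlinarith [norm_nonneg p, norm_nonneg q]
  have h1 : (∮ z in C(0, 1), (z - p)⁻¹) = 2 * π * I :=
    circleIntegral.integral_sub_inv_of_mem_ball (by simpa using hp1)
  have hqne : ∀ z ∈ Metric.closedBall (0:ℂ) 1, z - q ≠ 0 := by
    intro z hz h
    rw [sub_eq_zero] at h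
    subst h
    simp at hz; linarith
  have h2 : (∮ z in C(0, 1), (z - q)⁻¹) = 0 := by
    refine circleIntegral_eq_zero_of_differentiable_on_off_countable zero_le_one
      Set.countable_empty ?_ ?_
    · exact ContinuousOn.inv₀ (by fun_prop) hqne
    · intro z hz
      exact DifferentiableAt.inv (by fun_prop) (hqne z (Metric.ball_subset_closedBall hz.1))
  have h3 : (∮ z in C(0, 1), ((z - p)⁻¹ - (z - q)⁻¹)) = 2 * π * I := by
    rw [circleIntegral.integral_sub, h1, h2, sub_zero]
    · rw [circleIntegrable_sub_inv_iff]; right; simp; exact hp1.ne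
    · rw [circleIntegrable_sub_inv_iff]; right; simp; exact hq1.ne.symm
  -- The integrand of the circle integral in terms of `θ`; it uses `sin θ = (ζ⁻¹ - ζ) i / 2`.
  have h4 : ∀ θ : ℝ, deriv (circleMap 0 1) θ •
      ((circleMap 0 1 θ - p)⁻¹ - (circleMap 0 1 θ - q)⁻¹) = (-S) * (w - ρ * Real.sin θ)⁻¹ := by
    intro θ
    set ζ : ℂ := circleMap 0 1 θ with hζ
    have hζn : ‖ζ‖ = 1 := by simp [hζ]
    have hζ0 : ζ ≠ 0 := by intro h; rw [h] at hζn; simp at hζn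
    have hzp : ζ - p ≠ 0 := by
      intro h; rw [sub_eq_zero] at h; rw [h] at hζn; linarith
    have hzq : ζ - q ≠ 0 := hqne ζ (by simp [hζn])
    have hsin : (Real.sin θ : ℂ) = (ζ⁻¹ - ζ) * I / 2 := by
      have e : ζ = Complex.exp (θ * I) := by simp [hζ, circleMap]
      rw [ofReal_sin, Complex.sin, e, ← Complex.exp_neg, neg_mul]
    have hfac : w - ρ * Real.sin θ = ρ * I / 2 * (ζ⁻¹ * ((ζ - p) * (ζ - q))) := by
      have e1 : (ζ - p) * (ζ - q) = ζ ^ 2 - 2 * I * w / ρ * ζ - 1 := by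
        have : p + q = 2 * I * w / ρ := by rw [hp, hq]; ring
        rw [← this]; linear_combination hpq
      rw [e1, hsin]
      field_simp
      linear_combination (2 * w * ζ) * I_sq
    have hdiff : p - q = 2 * S / ρ := by rw [hp, hq]; ring
    have hsub : (ζ - p)⁻¹ - (ζ - q)⁻¹ = (p - q) * ((ζ - p) * (ζ - q))⁻¹ := by
      field_simp; ring
    rw [deriv_circleMap, ← hζ, hsub, hfac, hdiff, smul_eq_mul]
    field_simp
    linear_combination I_sq
  have h5 : (∮ z in C(0, 1), ((z - p)⁻¹ - (z - q)⁻¹)) =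
      (-S) * ∫ θ in (0:ℝ)..2 * π, (w - ρ * Real.sin θ)⁻¹ := by
    rw [circleIntegral, ← intervalIntegral.integral_const_mul]
    exact intervalIntegral.integral_congr (fun θ _ => h4 θ)
  rw [h5] at h3
  rw [← mul_div_assoc, eq_div_iff hS0]
  linear_combination (-1 : ℂ) * h3

/-- Half of the full circle integral, by the reflection `θ ↦ π - θ`. -/
lemma half_circle {w S : ℂ} {ρ : ℝ} (hρ : 0 < ρ) (hw : 0 < w.im) (hS : 0 < S.re)
    (hSw : S ^ 2 = ρ ^ 2 - w ^ 2) :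
    ∫ θ in (-(π / 2))..(π / 2), (w - ρ * Real.sin θ)⁻¹ = π * (-I / S) := by
  set f : ℝ → ℂ := fun θ => (w - ρ * Real.sin θ)⁻¹ with hf
  have hfc : Continuous f := by
    refine Continuous.inv₀ (by fun_prop) (fun θ h => ?_)
    have := congrArg Complex.im h
    simp [-ofReal_sin] at this
    exact hw.ne' this
  have hper : Function.Periodic f (2 * π) := by
    intro θ; simp only [hf, Real.sin_add_two_pi]
  have h1 := hper.intervalIntegral_add_eq (-(π / 2)) 0
  rw [zero_add, circle_integral_aux hρ hw hS hSw,
    ← intervalIntegral.integral_add_adjacent_intervals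
      (hfc.intervalIntegrable _ (π / 2)) (hfc.intervalIntegrable _ _)] at h1
  have h2 : ∫ θ in (π / 2)..(-(π / 2) + 2 * π), f θ = ∫ θ in (-(π / 2))..(π / 2), f θ := by
    have := intervalIntegral.integral_comp_sub_left (a := -(π / 2)) (b := π / 2) f π
    rw [show π - π / 2 = π / 2 by ring, show π - -(π / 2) = -(π / 2) + 2 * π by ring] at this
    rw [← this]
    simp only [hf, Real.sin_pi_sub]
  rw [h2] at h1
  linear_combination h1 / 2

/-- Cauchy transform of the arcsine density of level `t`, in the upper half-plane. The density
vanishes off `|s - 1/2| < √(1 - t²) / 2` thanks to the junk values of `√` and `⁻¹`, and the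
substitution `s = 1/2 + ρ sin θ` with `ρ = √(1 - t²) / 2` removes the endpoint singularities. -/
lemma arcsine_transform {z S : ℂ} {t : ℝ} (ht0 : 0 < t) (ht1 : t < 1) (hz : 0 < z.im)
    (hS : 0 < S.re) (hSw : S ^ 2 = ((1 - t ^ 2) / 4 : ℝ) - (z - 1 / 2) ^ 2) :
    ∫ s in Set.Ioo (0:ℝ) 1, ((√(4 * (s - s ^ 2) - t ^ 2))⁻¹ : ℝ) * (z - s)⁻¹
      = π / 2 * (-I / S) := by
  set ρ : ℝ := √(1 - t ^ 2) / 2 with hρd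
  have h1t : 0 < 1 - t ^ 2 := by nlinarith
  have hρ : 0 < ρ := by positivity
  have hρ2 : ρ ^ 2 = (1 - t ^ 2) / 4 := by rw [hρd, div_pow, Real.sq_sqrt h1t.le]; norm_num
  have hρh : ρ < 1 / 2 := by nlinarith
  have hpi := Real.pi_pos
  set T : Set ℝ := Set.Ioo (-(π / 2)) (π / 2)
  set f : ℝ → ℝ := fun θ => 1 / 2 + ρ * Real.sin θ with hf
  have himg : f '' T = Set.Ioo (1 / 2 - ρ) (1 / 2 + ρ) := by
    ext s
    constructor
    · rintro ⟨θ, hθ, rfl⟩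
      have hc := Real.cos_pos_of_mem_Ioo hθ
      have h1 : Real.sin θ < 1 := by nlinarith [Real.sin_sq_add_cos_sq θ]
      have h2 : -1 < Real.sin θ := by nlinarith [Real.sin_sq_add_cos_sq θ]
      constructor <;> simp only [hf] <;> nlinarith
    · intro hs
      have l1 : -1 < (s - 1 / 2) / ρ := by rw [lt_div_iff₀ hρ]; linarith [hs.1]
      have l2 : (s - 1 / 2) / ρ < 1 := by rw [div_lt_iff₀ hρ]; linarith [hs.2]
      refine ⟨Real.arcsin ((s - 1 / 2) / ρ), ⟨Real.neg_pi_div_two_lt_arcsin.2 l1,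
        Real.arcsin_lt_pi_div_two.2 l2⟩, ?_⟩
      simp only [hf]
      rw [Real.sin_arcsin l1.le l2.le]
      field_simp; ring
  have hinj : Set.InjOn f T := by
    intro x hx y hy hxy
    refine Real.injOn_sin (Set.Ioo_subset_Icc_self hx) (Set.Ioo_subset_Icc_self hy) ?_
    simpa [hf, hρ.ne'] using hxy
  have hsub : Set.Ioo (1 / 2 - ρ) (1 / 2 + ρ) ⊆ Set.Ioo (0:ℝ) 1 :=
    Set.Ioo_subset_Ioo (by linarith) (by linarith)
  have hrestrict := setIntegral_eq_of_subset_of_forall_sdiff_eq_zero (μ := volume)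
    (f := fun s : ℝ => (((√(4 * (s - s ^ 2) - t ^ 2))⁻¹ : ℝ) : ℂ) * (z - s)⁻¹)
    measurableSet_Ioo hsub (by
      intro s hs
      have : 4 * (s - s ^ 2) - t ^ 2 ≤ 0 := by
        have h : ¬ (1 / 2 - ρ < s ∧ s < 1 / 2 + ρ) := hs.2
        by_contra! h'
        have : |s - 1 / 2| < ρ := abs_lt_of_sq_lt_sq (by nlinarith) hρ.le
        rw [abs_lt] at this
        exact h ⟨by linarith, by linarith⟩
      rw [Real.sqrt_eq_zero_of_nonpos this]; simp)
  rw [hrestrict, ← himg, integral_image_eq_integral_abs_deriv_smul (f' := fun θ => ρ * Real.cos θ)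
    measurableSet_Ioo (fun θ _ => (((Real.hasDerivAt_sin θ).const_mul ρ).const_add
      (1 / 2)).hasDerivWithinAt) hinj]
  have hcongr : ∀ θ ∈ T, |ρ * Real.cos θ| • ((((√(4 * (f θ - (f θ) ^ 2) - t ^ 2))⁻¹ : ℝ) : ℂ) *
      (z - f θ)⁻¹) = (1 / 2 : ℂ) * ((z - 1 / 2) - ρ * Real.sin θ)⁻¹ := by
    intro θ hθ
    have hc := mul_pos hρ (Real.cos_pos_of_mem_Ioo hθ)
    have e : 4 * (f θ - (f θ) ^ 2) - t ^ 2 = (2 * (ρ * Real.cos θ)) ^ 2 := by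
      simp only [hf]
      linear_combination (-4) * hρ2 - 4 * ρ ^ 2 * Real.sin_sq_add_cos_sq θ
    rw [e, Real.sqrt_sq (by positivity), abs_of_pos hc, real_smul, ← mul_assoc, ← ofReal_mul]
    congr 1
    · rw [show ρ * Real.cos θ * (2 * (ρ * Real.cos θ))⁻¹ = 1 / 2 by
        rw [mul_inv, mul_left_comm, mul_inv_cancel₀ hc.ne']; norm_num]; simp
    · congr 1; simp only [hf]; push_cast; ring
  rw [setIntegral_congr_fun measurableSet_Ioo hcongr, ← integral_Ioc_eq_integral_Ioo,
    ← intervalIntegral.integral_of_le (by linarith), intervalIntegral.integral_const_mul,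
    half_circle hρ (by simpa using hz) hS (by rw [hSw, ← hρ2]; push_cast; ring)]
  ring

/-! ### The derivative of the potential and its boundary values -/

lemma re_sqrt_pos {D : ℂ} (hD : 0 < D.re) : 0 < (D ^ (2⁻¹ : ℂ)).re := by
  have hD0 : D ≠ 0 := by rintro rfl; simp at hD
  rw [cpow_def_of_ne_zero hD0, exp_re]
  refine mul_pos (Real.exp_pos _) (Real.cos_pos_of_mem_Ioo ?_)
  have h := abs_lt.1 (Complex.abs_arg_lt_pi_div_two_iff.2 (Or.inl hD))
  have e : (Complex.log D * 2⁻¹).im = D.arg / 2 := by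
    have : (2⁻¹ : ℂ) = ((2⁻¹ : ℝ) : ℂ) := by push_cast; rfl
    rw [this, im_mul_ofReal, log_im]; ring
  rw [e]
  have := Real.pi_pos
  constructor <;> linarith [h.1, h.2]

lemma norm_inv_sub_le {z : ℂ} {r : ℝ} (hr : 0 < r) (hz : r ≤ |z.im|) (s : ℝ) :
    ‖(z - s)⁻¹‖ ≤ r⁻¹ := by
  rw [norm_inv]
  refine inv_anti₀ hr (hz.trans ?_)
  simpa using abs_im_le_norm (z - s)

/-- Fubini: the Cauchy transform of the equilibrium density is the average over the level
`t ∈ (0, c]` of the Cauchy transforms of the arcsine laws. Here `S t` is any square root with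
positive real part of the radicand. -/
lemma density_cauchy_eq_integral {c : ℝ} (hc0 : 0 < c) (hc1 : c < 1) {z : ℂ} (hz : 0 < z.im)
    (S : ℝ → ℂ) (hS : ∀ t ∈ Set.Ioc 0 c, 0 < (S t).re)
    (hSw : ∀ t ∈ Set.Ioc 0 c, (S t) ^ 2 = ((1 - t ^ 2) / 4 : ℝ) - (z - 1 / 2) ^ 2) :
    ∫ s in Set.Ioo (0:ℝ) 1,
        ((2 / (π * c) * Real.arcsin (c / (2 * √(s - s ^ 2))) : ℝ) : ℂ) * (z - s)⁻¹
      = (1 / c) * ∫ t in Set.Ioc 0 c, -I / S t := by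
  have hpi := Real.pi_pos
  set k : ℝ → ℝ → ℝ := fun s t => (√(4 * (s - s ^ 2) - t ^ 2))⁻¹ with hk
  have hlayer : ∀ s ∈ Set.Ioo (0:ℝ) 1, IntegrableOn (k s) (Set.Ioc 0 c) ∧
      ∫ t in Set.Ioc 0 c, k s t = Real.arcsin (c / (2 * √(s - s ^ 2))) := by
    intro s hs
    have hpos : 0 < s - s ^ 2 := by nlinarith [hs.1, hs.2]
    have := arcsin_layer (A := 2 * √(s - s ^ 2)) (by positivity) hc0
    rwa [mul_pow, Real.sq_sqrt hpos.le, show (2:ℝ) ^ 2 = 4 by norm_num] at this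
  have hmeas : Measurable (fun p : ℝ × ℝ => ((k p.1 p.2 : ℝ) : ℂ) * (z - p.1)⁻¹) := by
    simp only [hk]; fun_prop
  have hint : Integrable (fun p : ℝ × ℝ => ((k p.1 p.2 : ℝ) : ℂ) * (z - p.1)⁻¹)
      ((volume.restrict (Set.Ioo 0 1)).prod (volume.restrict (Set.Ioc 0 c))) := by
    rw [integrable_prod_iff hmeas.aestronglyMeasurable]
    constructor
    · filter_upwards [ae_restrict_mem measurableSet_Ioo] with s hs
      exact (hlayer s hs).1.ofReal.mul_const _
    · refine Integrable.of_bound (C := π / 2 * z.im⁻¹)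
        hmeas.norm.aestronglyMeasurable.integral_prod_right' ?_
      filter_upwards [ae_restrict_mem measurableSet_Ioo] with s hs
      have : ∀ t, ‖((k s t : ℝ) : ℂ) * (z - s)⁻¹‖ = k s t * ‖(z - s)⁻¹‖ := by
        intro t
        rw [norm_mul, norm_real, Real.norm_of_nonneg (by simp only [hk]; positivity)]
      simp only [this]
      rw [integral_mul_const, (hlayer s hs).2, norm_mul, norm_norm]
      refine mul_le_mul ?_ (norm_inv_sub_le hz (le_abs_self _) s) (norm_nonneg _) (by positivity)
      rw [Real.norm_eq_abs, abs_le]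
      exact ⟨Real.neg_pi_div_two_le_arcsin _, Real.arcsin_le_pi_div_two _⟩
  have hswap := integral_integral_swap (f := fun s t => ((k s t : ℝ) : ℂ) * (z - s)⁻¹) hint
  have e1 : ∀ s ∈ Set.Ioo (0:ℝ) 1,
      ((2 / (π * c) * Real.arcsin (c / (2 * √(s - s ^ 2))) : ℝ) : ℂ) * (z - s)⁻¹ =
      (2 / (π * c) : ℂ) * ∫ t in Set.Ioc 0 c, ((k s t : ℝ) : ℂ) * (z - s)⁻¹ := by
    intro s hs
    rw [integral_mul_const, integral_complex_ofReal, (hlayer s hs).2]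
    push_cast; ring
  have e2 : ∀ t ∈ Set.Ioc 0 c, ∫ s in Set.Ioo (0:ℝ) 1, ((k s t : ℝ) : ℂ) * (z - s)⁻¹ =
      π / 2 * (-I / S t) := fun t ht =>
    arcsine_transform ht.1 (ht.2.trans_lt hc1) hz (hS t ht) (hSw t ht)
  rw [setIntegral_congr_fun measurableSet_Ioo e1, integral_const_mul, hswap,
    setIntegral_congr_fun measurableSet_Ioc e2, integral_const_mul]
  have : (π : ℂ) ≠ 0 := by exact_mod_cast hpi.ne'
  have : (c : ℂ) ≠ 0 := by exact_mod_cast hc0.ne'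
  field_simp

lemma hasDerivAt_log_potential {m : ℝ → ℝ} (hm : Measurable m) {C : ℝ} (hC : ∀ s, |m s| ≤ C)
    {z : ℂ} (hz : z.im ≠ 0) :
    HasDerivAt (fun z : ℂ => ∫ s in Set.Ioo (0:ℝ) 1, (m s : ℂ) * Complex.log (z - s))
      (∫ s in Set.Ioo (0:ℝ) 1, (m s : ℂ) * (z - s)⁻¹) z := by
  have hr : 0 < |z.im| / 2 := by positivity
  have hC0 : 0 ≤ C := (abs_nonneg _).trans (hC 0)
  have hball : ∀ y ∈ Metric.ball z (|z.im| / 2), |z.im| / 2 ≤ |y.im| := by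
    intro y hy
    rw [mem_ball_iff_norm] at hy
    have h1 := (abs_im_le_norm (y - z)).trans_lt hy
    rw [sub_im] at h1
    have h2 := abs_sub_abs_le_abs_sub z.im y.im
    rw [abs_sub_comm] at h2
    linarith
  have hne : ∀ y ∈ Metric.ball z (|z.im| / 2), y.im ≠ 0 := fun y hy h => by
    have := hball y hy
    rw [h, abs_zero] at this
    linarith
  have hslit : ∀ y : ℂ, y.im ≠ 0 → ∀ s : ℝ, y - s ∈ slitPlane := fun y hy s =>
    Or.inr (by simpa using hy)
  refine (hasDerivAt_integral_of_dominated_loc_of_deriv_le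
    (F := fun (z : ℂ) (s : ℝ) => (m s : ℂ) * Complex.log (z - s))
    (F' := fun (z : ℂ) (s : ℝ) => (m s : ℂ) * (z - s)⁻¹)
    (bound := fun _ => C * (|z.im| / 2)⁻¹)
    (Metric.ball_mem_nhds z hr) ?_ ?_ ?_ ?_ ?_ ?_).2
  · exact Eventually.of_forall fun y => Measurable.aestronglyMeasurable (by fun_prop)
  · have hcont : ContinuousOn (fun s : ℝ => Complex.log (z - s)) (Set.Icc 0 1) :=
      ContinuousOn.clog (by fun_prop) (fun s _ => hslit z hz s)
    have hi : IntegrableOn (fun s : ℝ => Complex.log (z - s)) (Set.Ioo 0 1) :=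
      (hcont.integrableOn_Icc).mono_set Set.Ioo_subset_Icc_self
    exact hi.bdd_mul (c := C) (Measurable.aestronglyMeasurable (by fun_prop))
      (Eventually.of_forall fun s => by rw [norm_real]; exact hC s)
  · exact Measurable.aestronglyMeasurable (by fun_prop)
  · refine Eventually.of_forall fun s y hy => ?_
    rw [norm_mul, norm_real]
    exact mul_le_mul (hC s) (norm_inv_sub_le hr (hball y hy) s) (norm_nonneg _) hC0
  · exact integrable_const _
  · refine Eventually.of_forall fun s y hy => ?_
    have := ((hasDerivAt_id y).sub_const (s : ℂ)).clog (hslit y (hne y hy) s)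
    simpa using this.const_mul (m s : ℂ)

lemma re_radicand (t u ε : ℝ) : ((((1 - t ^ 2) / 4 : ℝ) : ℂ) - (u + ε * I) ^ 2).re =
    (1 - t ^ 2) / 4 - u ^ 2 + ε ^ 2 := by
  rw [sub_re, ofReal_re, pow_two (_ + _ : ℂ)]
  simp only [mul_re, mul_im, add_re, add_im, ofReal_re, ofReal_im, I_re, I_im]
  ring

/-- Dominated convergence down to the real axis, with `u = x - 1/2`. On the band the radicand
has real part at least `(1 - c²)/4 - u² > 0`, uniformly in `t` and `ε`, and becomes a positive
real at `ε = 0`, so the limit is purely imaginary. -/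
lemma tendsto_boundary {c : ℝ} (hc0 : 0 < c) {u : ℝ} (hu : u ^ 2 < (1 - c ^ 2) / 4) :
    Tendsto (fun ε : ℝ => ∫ t in Set.Ioc 0 c,
        -I / ((((1 - t ^ 2) / 4 : ℝ) : ℂ) - (u + ε * I) ^ 2) ^ (2⁻¹ : ℂ)) (𝓝[>] 0)
      (𝓝 (-I * ((∫ t in Set.Ioc 0 c, (√((1 - t ^ 2) / 4 - u ^ 2))⁻¹ : ℝ) : ℂ))) := by
  set δ : ℝ := (1 - c ^ 2) / 4 - u ^ 2 with hδ
  have hδ0 : 0 < δ := by linarith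
  rw [← integral_complex_ofReal, ← integral_const_mul]
  have hre : ∀ t ∈ Set.Ioc 0 c, ∀ ε : ℝ,
      δ ≤ ((((1 - t ^ 2) / 4 : ℝ) : ℂ) - (u + ε * I) ^ 2).re := by
    intro t ht ε
    rw [re_radicand]
    nlinarith [ht.1, ht.2, sq_nonneg ε]
  refine tendsto_integral_filter_of_dominated_convergence (fun _ => (√δ)⁻¹) ?_ ?_ ?_ ?_
  · exact Eventually.of_forall fun ε => Measurable.aestronglyMeasurable (by fun_prop)
  · refine Eventually.of_forall fun ε => ?_
    filter_upwards [ae_restrict_mem measurableSet_Ioc] with t ht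
    set D : ℂ := (((1 - t ^ 2) / 4 : ℝ) : ℂ) - (u + ε * I) ^ 2
    have hsq : (D ^ (2⁻¹ : ℂ)) ^ 2 = D := by
      exact cpow_nat_inv_pow D (n := 2) two_ne_zero
    rw [norm_div, norm_neg, norm_I, one_div]
    refine inv_anti₀ (by positivity) ?_
    rw [Real.sqrt_le_left (norm_nonneg _), ← norm_pow, hsq]
    exact (hre t ht ε).trans (re_le_norm D)
  · exact integrable_const _
  · filter_upwards [ae_restrict_mem measurableSet_Ioc] with t ht
    have h0 : 0 < (1 - t ^ 2) / 4 - u ^ 2 := by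
      have := hre t ht 0
      rw [re_radicand] at this
      linarith
    have hlim : Tendsto (fun ε : ℝ => (((1 - t ^ 2) / 4 : ℝ) : ℂ) - (u + ε * I) ^ 2) (𝓝[>] 0)
        (𝓝 (((1 - t ^ 2) / 4 - u ^ 2 : ℝ) : ℂ)) := by
      have hc : Continuous (fun ε : ℝ => (((1 - t ^ 2) / 4 : ℝ) : ℂ) - (u + ε * I) ^ 2) := by
        fun_prop
      have := (hc.tendsto 0).mono_left (nhdsWithin_le_nhds (s := Set.Ioi 0))
      simpa using this
    have hsq : (((1 - t ^ 2) / 4 - u ^ 2 : ℝ) : ℂ) ^ (2⁻¹ : ℂ) =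
        ((√((1 - t ^ 2) / 4 - u ^ 2) : ℝ) : ℂ) := by
      rw [Real.sqrt_eq_rpow, ofReal_cpow h0.le]; norm_num
    have h1 := (hlim.cpow (tendsto_const_nhds (x := (2⁻¹ : ℂ)))
      (Or.inl (by rw [ofReal_re]; exact h0)))
    rw [hsq] at h1
    have h2 := (tendsto_const_nhds (x := -I)).div h1
      (by exact_mod_cast (Real.sqrt_pos.2 h0).ne')
    rw [ofReal_inv]
    exact h2

/-- for `x ∈ (a,b)` the boundary values of the derivative of the
logarithmic potential `g` satisfy `g′₊(x) + g′₋(x) = 0`. -/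
theorem hahn_g_deriv_boundary_sum_zero
    (c : ℝ) (hc0 : 0 < c) (hc1 : c < 1)
    (a b : ℝ)
    (ha : a = (1 - Real.sqrt (1 - c ^ 2)) / 2)
    (hb : b = (1 + Real.sqrt (1 - c ^ 2)) / 2)
    (μ : ℝ → ℝ)
    (hμab : ∀ x, a < x → x < b →
      μ x = (2 / (π * c)) * Real.arcsin (c / (2 * Real.sqrt (x - x ^ 2))))
    (hμout : ∀ x, (0 ≤ x ∧ x ≤ a) ∨ (b ≤ x ∧ x ≤ 1) → μ x = 1 / c)
    (g : ℂ → ℂ)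
    (hg : ∀ z, g z = ∫ s in (0:ℝ)..1, (μ s : ℂ) * Complex.log (z - s))
    (x : ℝ) (hax : a < x) (hxb : x < b) :
    ∃ Lp Lm : ℂ,
      Tendsto (fun ε : ℝ => deriv g (↑x + ↑ε * Complex.I)) (𝓝[>] 0) (𝓝 Lp) ∧
      Tendsto (fun ε : ℝ => deriv g (↑x - ↑ε * Complex.I)) (𝓝[>] 0) (𝓝 Lm) ∧
      Lp + Lm = 0 := by
  have hpi := Real.pi_pos
  have h1c : 0 < 1 - c ^ 2 := by nlinarith
  have hsq := Real.sq_sqrt h1c.le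
  set r : ℝ := √(1 - c ^ 2) with hr
  have hr0 : 0 ≤ r := Real.sqrt_nonneg _
  set m : ℝ → ℝ := fun s => 2 / (π * c) * Real.arcsin (c / (2 * √(s - s ^ 2))) with hm
  have hmm : Measurable m := by
    simp only [hm]
    exact (Real.measurable_arcsin.comp (by fun_prop)).const_mul _
  have hmb : ∀ s, |m s| ≤ 2 / (π * c) * (π / 2) := by
    intro s
    simp only [hm]
    rw [abs_mul, abs_of_pos (by positivity)]
    refine mul_le_mul_of_nonneg_left ?_ (by positivity)
    exact abs_le.2 ⟨Real.neg_pi_div_two_le_arcsin _, Real.arcsin_le_pi_div_two _⟩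
  -- On the saturated intervals `s - s² ≤ c² / 4`, so the arcsine takes the constant value `π / 2`
  -- and the formula for the band is valid on all of `(0, 1)`.
  have hμm : ∀ s ∈ Set.Ioo (0:ℝ) 1, μ s = m s := by
    intro s hs
    by_cases h : a < s ∧ s < b
    · exact hμab s h.1 h.2
    · have hout : (0 ≤ s ∧ s ≤ a) ∨ (b ≤ s ∧ s ≤ 1) := by
        rcases lt_or_ge a s with h1 | h1
        · exact Or.inr ⟨not_lt.1 fun h2 => h ⟨h1, h2⟩, hs.2.le⟩
        · exact Or.inl ⟨hs.1.le, h1⟩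
      have hpos : 0 < s - s ^ 2 := by nlinarith [hs.1, hs.2]
      have hle : s - s ^ 2 ≤ (c / 2) ^ 2 := by
        rcases hout with h1 | h1 <;> nlinarith
      have hle2 : √(s - s ^ 2) ≤ c / 2 := Real.sqrt_le_iff.2 ⟨by positivity, hle⟩
      rw [hμout s hout]
      simp only [hm]
      rw [Real.arcsin_of_one_le]
      · field_simp
      · rw [le_div_iff₀ (by positivity)]; linarith
  have hgm : g = fun z : ℂ => ∫ s in Set.Ioo (0:ℝ) 1, (m s : ℂ) * Complex.log (z - s) := by
    funext z
    rw [hg, intervalIntegral.integral_of_le zero_le_one, integral_Ioc_eq_integral_Ioo]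
    exact setIntegral_congr_fun measurableSet_Ioo fun s hs => by simp only [hμm s hs]
  have hderiv : ∀ z : ℂ, z.im ≠ 0 →
      deriv g z = ∫ s in Set.Ioo (0:ℝ) 1, (m s : ℂ) * (z - s)⁻¹ := fun z hz => by
    rw [hgm]; exact (hasDerivAt_log_potential hmm hmb hz).deriv
  have hu : (x - 1 / 2) ^ 2 < (1 - c ^ 2) / 4 := by nlinarith
  set J : ℝ := ∫ t in Set.Ioc 0 c, (√((1 - t ^ 2) / 4 - (x - 1 / 2) ^ 2))⁻¹ with hJ
  have hplus : Tendsto (fun ε : ℝ => deriv g (↑x + ↑ε * Complex.I)) (𝓝[>] 0)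
      (𝓝 ((1 / c) * (-I * J))) := by
    refine ((tendsto_boundary hc0 hu).const_mul (1 / c : ℂ)).congr' ?_
    filter_upwards [self_mem_nhdsWithin] with ε hε
    have hε' : 0 < ε := hε
    rw [hderiv _ (by simpa using hε'.ne')]
    refine (density_cauchy_eq_integral hc0 hc1 (by simpa using hε')
      (fun t => ((((1 - t ^ 2) / 4 : ℝ) : ℂ) - (((x - 1 / 2 : ℝ) : ℂ) + ε * I) ^ 2) ^ (2⁻¹ : ℂ))
      (fun t ht => re_sqrt_pos ?_) (fun t ht => ?_)).symm
    · rw [re_radicand]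
      nlinarith [ht.1, ht.2, sq_nonneg ε]
    · have := cpow_nat_inv_pow
        ((((1 - t ^ 2) / 4 : ℝ) : ℂ) - (((x - 1 / 2 : ℝ) : ℂ) + ε * I) ^ 2) (n := 2) two_ne_zero
      rw [Nat.cast_ofNat] at this
      rw [this]; push_cast; ring
  refine ⟨_, (starRingEnd ℂ) ((1 / c) * (-I * J)), hplus, ?_, ?_⟩
  · refine ((continuous_conj.tendsto _).comp hplus).congr' ?_
    filter_upwards [self_mem_nhdsWithin] with ε hε
    have hε' : 0 < ε := hε
    rw [Function.comp_apply, hderiv _ (by simpa using hε'.ne'),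
      hderiv _ (by simpa using hε'.ne'), ← integral_conj]
    refine integral_congr_ae (Eventually.of_forall fun s => ?_)
    simp [sub_eq_add_neg]
  · simp
end

section
/- The boundary values g̃_±(x) := lim_{ε→0⁺} g̃(x ± iε) satisfy: g̃₊(x) − g̃₋(x) = 2πi(1 − 1/c) for x ∈ (−∞,0) and for x ∈ (0,a); g̃₊(x) − g̃₋(x) = 2πi·∫_x^b (μ(s) − 1/c) ds for x ∈ (a,b); and g̃₊(x) − g̃₋(x) = 0 for x ∈ (b,1). Consequently, for positive integers n < N with n/N = c, the function e^{n g̃(z)} extends analytically to ℂ∖[a,b]. -/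
open Complex Real Filter Topology Set MeasureTheory

/-!
Since `μ = 1/c` on `[0,a] ∪ [b,1]`, the function `g̃` is the logarithmic potential
`∫_a^b h(s) log(z-s) ds` of the signed density `h = μ - 1/c` (`potential_sub_eq`).

*Jumps.* For `ε > 0` the difference `log(x+iε-s) - log(x-iε-s)` equals `2i arg(x-s+iε)`. It is
bounded by `2π` and tends to `2πi` if `s > x` and to `0` if `s < x`, so dominated convergence gives
`g̃₊(x) - g̃₋(x) = 2πi ∫_{(a,b) ∩ (x,∞)} h` (`tendsto_potential_jump`). For `x < a` the value follows
from the total mass `∫_a^b h = 1 - 1/c` (`density_continuousOn_and_mass`), which rests on an explicit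
antiderivative of `arcsin (c / √(1-u²))` (`integral_arcsin_div_sqrt`).

*Extension.* Off the cut, `log(z-s) = log((z-s)/(z-b)) + log(z-b)`, hence
`g̃(z) = ∫_a^b h(s) log((z-s)/(z-b)) ds + (1-1/c) log(z-b)`. For `s ∈ [a,b]` the quotient
`(z-s)/(z-b)` lies on `(-∞,0]` only if `z ∈ [a,b]`, so the integral is holomorphic on `ℂ∖[a,b]`
(`differentiableAt_log_div_potential`). As `n(1-1/c) = n-N` is an integer, the second term contributes
the rational factor `(z-b)^(n-N)` to `e^{n g̃}`.
-/

/-! ### The total mass of the density -/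

/-- With `R² = 1 - c²`, an antiderivative on `[-R,R]` is
`u arcsin(c/√(1-u²)) + c arcsin(u/R) - arcsin(cu/(R√(1-u²)))`; written with `arcsin` throughout, it
is continuous up to the endpoints, where the derivatives of its terms blow up. -/
theorem integral_arcsin_div_sqrt {c R : ℝ} (hc : 0 < c) (hR : 0 < R) (hcR : c ^ 2 + R ^ 2 = 1) :
    ∫ u in (-R)..R, Real.arcsin (c / √(1 - u ^ 2)) = π * (R + c - 1) := by
  have hw : ∀ u ∈ Icc (-R) R, c ^ 2 ≤ 1 - u ^ 2 := fun u hu => by nlinarith [hu.1, hu.2]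
  have hwpos : ∀ u ∈ Icc (-R) R, 0 < √(1 - u ^ 2) := fun u hu =>
    Real.sqrt_pos.2 (lt_of_lt_of_le (by positivity) (hw u hu))
  have hcont : ContinuousOn (fun u : ℝ => Real.arcsin (c / √(1 - u ^ 2))) (Icc (-R) R) :=
    Real.continuous_arcsin.comp_continuousOn
      (continuousOn_const.div (by fun_prop) fun u hu => (hwpos u hu).ne')
  have key := intervalIntegral.integral_eq_sub_of_hasDerivAt_of_le (a := -R) (b := R)
    (f := fun u => u * Real.arcsin (c / √(1 - u ^ 2)) + c * Real.arcsin (u / R)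
      - Real.arcsin (c * u / (R * √(1 - u ^ 2))))
    (f' := fun u => Real.arcsin (c / √(1 - u ^ 2))) (by linarith) ?_ ?_ ?_
  · have h1 : √(1 - R ^ 2) = c := by
      rw [show 1 - R ^ 2 = c ^ 2 by linarith, Real.sqrt_sq hc.le]
    rw [key]
    simp only [neg_sq, h1, neg_div, div_self hR.ne', div_self hc.ne', mul_neg,
      Real.arcsin_neg, Real.arcsin_one]
    rw [show c * R / (R * c) = 1 by field_simp, Real.arcsin_one]
    ring
  · refine ((continuousOn_id.mul hcont).add (by fun_prop)).sub
      (Real.continuous_arcsin.comp_continuousOn ?_)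
    exact ContinuousOn.div (by fun_prop) (by fun_prop)
      fun u hu => (mul_pos hR (hwpos u hu)).ne'
  · intro u hu
    have hw0 := hwpos u (Ioo_subset_Icc_self hu)
    have hq2 : 0 < R ^ 2 - u ^ 2 := by nlinarith [hu.1, hu.2]
    have hw2 : √(1 - u ^ 2) ^ 2 = 1 - u ^ 2 := Real.sq_sqrt (by nlinarith)
    have hdw : HasDerivAt (fun u : ℝ => √(1 - u ^ 2)) (-u / √(1 - u ^ 2)) u := by
      have := ((hasDerivAt_pow 2 u).const_sub 1).sqrt (by nlinarith)
      convert this using 1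
      field_simp
      norm_num
      ring
    set w := √(1 - u ^ 2) with hwdef
    set q := √(R ^ 2 - u ^ 2) with hqdef
    have hq0 : 0 < q := Real.sqrt_pos.2 hq2
    have hqs : q ^ 2 = R ^ 2 - u ^ 2 := Real.sq_sqrt hq2.le
    -- `arcsin` has derivative `1 / t` at a point `y` with `1 - y² = t²` and `t > 0`
    have harc : ∀ y t : ℝ, 0 < t → 1 - y ^ 2 = t ^ 2 → HasDerivAt Real.arcsin (1 / t) y := by
      intro y t ht h
      have hy := Real.hasDerivAt_arcsin (x := y) (by rintro rfl; nlinarith)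
        (by rintro rfl; nlinarith)
      rwa [h, Real.sqrt_sq ht.le] at hy
    have d1 : HasDerivAt (fun u : ℝ => Real.arcsin (c / √(1 - u ^ 2)))
        (1 / (q / w) * (c * u / w ^ 3)) u := by
      refine HasDerivAt.comp u (harc _ (q / w) (by positivity) ?_) ?_
      · rw [← hwdef]; field_simp; linarith
      · have h := (hasDerivAt_const u c).fun_div hdw hw0.ne'
        rw [← hwdef] at h
        convert h using 1
        field_simp; ring
    have d2 : HasDerivAt (fun u : ℝ => Real.arcsin (u / R)) (1 / (q / R) * (1 / R)) u := by
      refine HasDerivAt.comp u (harc _ (q / R) (by positivity) ?_) ((hasDerivAt_id u).div_const R)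
      field_simp; linarith
    have d3 : HasDerivAt (fun u : ℝ => Real.arcsin (c * u / (R * √(1 - u ^ 2))))
        (1 / (q / (R * w)) * (c / (R * w ^ 3))) u := by
      refine HasDerivAt.comp u (harc _ (q / (R * w)) (by positivity) ?_) ?_
      · rw [← hwdef]; field_simp; rw [hqs, hw2]; linear_combination (-u ^ 2) * hcR
      · have h := ((hasDerivAt_id' u).const_mul c).fun_div (hdw.const_mul R) (mul_pos hR hw0).ne'
        rw [← hwdef] at h
        convert h using 1
        field_simp; rw [hw2]; ring
    have hd := (((hasDerivAt_id' u).fun_mul d1).fun_add (d2.const_mul c)).fun_sub d3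
    convert hd using 1
    rw [← hwdef]
    field_simp
    rw [hw2]; ring
  · exact (hcont.mono (by rw [uIcc_of_le (by linarith)])).intervalIntegrable

/-- The substitution `u = 2x - 1` turns `2√(x-x²)` into `√(1-u²)` and `[a,b]` into `[-R,R]`, where
`R = √(1-c²)`. -/
theorem density_continuousOn_and_mass {c a b : ℝ} (hc0 : 0 < c) (hc1 : c < 1)
    (ha : a = (1 - √(1 - c ^ 2)) / 2) (hb : b = (1 + √(1 - c ^ 2)) / 2) {μ : ℝ → ℝ}
    (hμab : ∀ x, a < x → x < b →
      μ x = (2 / (π * c)) * Real.arcsin (c / (2 * √(x - x ^ 2))))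
    (hμa : μ a = 1 / c) (hμb : μ b = 1 / c) :
    ContinuousOn μ (Icc a b) ∧ ∫ s in a..b, (μ s - 1 / c) = 1 - 1 / c := by
  have hR : 0 < √(1 - c ^ 2) := Real.sqrt_pos.2 (by nlinarith)
  have hR2 : √(1 - c ^ 2) ^ 2 = 1 - c ^ 2 := Real.sq_sqrt (by nlinarith)
  set R := √(1 - c ^ 2)
  have hab : a ≤ b := by linarith
  have hμ : EqOn μ (fun x => 2 / (π * c) * Real.arcsin (c / √(1 - (2 * x - 1) ^ 2))) (Icc a b) := by
    intro x hx
    -- at `x = a` and `x = b` the `arcsin` formula gives `arcsin 1 = π/2`, in agreement with `1/c`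
    have hend : (2 * x - 1) ^ 2 = R ^ 2 →
        2 / (π * c) * Real.arcsin (c / √(1 - (2 * x - 1) ^ 2)) = 1 / c := by
      intro h
      rw [h, hR2, show 1 - (1 - c ^ 2) = c ^ 2 by ring, Real.sqrt_sq hc0.le, div_self hc0.ne',
        Real.arcsin_one]
      field_simp
    rcases eq_or_lt_of_le hx.1 with h | h1
    · subst h; rw [hμa]; exact (hend (by rw [ha]; ring)).symm
    rcases eq_or_lt_of_le hx.2 with h | h2
    · subst h; rw [hμb]; exact (hend (by rw [hb]; ring)).symm
    rw [hμab x h1 h2]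
    have : √(1 - (2 * x - 1) ^ 2) = 2 * √(x - x ^ 2) := by
      rw [show 1 - (2 * x - 1) ^ 2 = 2 ^ 2 * (x - x ^ 2) by ring,
        Real.sqrt_mul (by positivity), Real.sqrt_sq (by norm_num)]
    simp only [this]
  have hcont : ContinuousOn μ (Icc a b) := by
    refine ContinuousOn.congr ?_ hμ
    refine continuousOn_const.mul (Real.continuous_arcsin.comp_continuousOn
      (continuousOn_const.div (by fun_prop) fun x hx => ?_))
    refine (Real.sqrt_pos.2 ?_).ne'
    have h1 : -R ≤ 2 * x - 1 := by linarith [hx.1]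
    have h2 : 2 * x - 1 ≤ R := by linarith [hx.2]
    nlinarith
  refine ⟨hcont, ?_⟩
  have hint : IntervalIntegrable μ volume a b :=
    (hcont.mono (by rw [uIcc_of_le hab])).intervalIntegrable
  rw [intervalIntegral.integral_sub hint (by simp), intervalIntegral.integral_const,
    intervalIntegral.integral_congr (by rwa [uIcc_of_le hab]),
    intervalIntegral.integral_const_mul,
    intervalIntegral.integral_comp_mul_sub (fun u => Real.arcsin (c / √(1 - u ^ 2)))
      (by norm_num : (2 : ℝ) ≠ 0) 1,
    show 2 * a - 1 = -R by rw [ha]; ring, show 2 * b - 1 = R by rw [hb]; ring,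
    integral_arcsin_div_sqrt hc0 hR (by linarith), smul_eq_mul, smul_eq_mul,
    show b - a = R by rw [ha, hb]; ring]
  field_simp
  ring

/-! ### Boundary values of the logarithm -/

theorem log_sub_log_conj {w : ℂ} (hw : 0 < w.im) :
    Complex.log w - Complex.log (starRingEnd ℂ w) = 2 * Complex.I * (w.arg : ℂ) := by
  rw [Complex.log_conj _ (Complex.arg_lt_pi_iff.2 (Or.inr hw.ne')).ne, Complex.sub_conj,
    Complex.log_im]
  push_cast; ring

/-- No branch correction is needed: the arguments of `z - s` and `z - b` are both in `[0,π)` or both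
in `(-π,0)`, so their difference stays in `(-π,π)`. -/
theorem log_div_eq_sub {z : ℂ} {s b : ℝ} (hz : z.im ≠ 0 ∨ (s < z.re ∧ b < z.re)) :
    Complex.log ((z - s) / (z - b)) = Complex.log (z - s) - Complex.log (z - b) := by
  have hs : z - s ∈ slitPlane := by
    rw [Complex.mem_slitPlane_iff]; rcases hz with h | h
    · right; simpa using h
    · left; simpa using h.1
  have hb : z - b ∈ slitPlane := by
    rw [Complex.mem_slitPlane_iff]; rcases hz with h | h
    · right; simpa using h
    · left; simpa using h.2
  have hbp := (Complex.mem_slitPlane_iff_arg.1 hb).1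
  have hsp := (Complex.mem_slitPlane_iff_arg.1 hs).1
  have ha1 := Complex.neg_pi_lt_arg (z - s)
  have ha2 := Complex.neg_pi_lt_arg (z - b)
  have ha3 := lt_of_le_of_ne (Complex.arg_le_pi (z - s)) hsp
  have ha4 := lt_of_le_of_ne (Complex.arg_le_pi (z - b)) hbp
  rw [div_eq_mul_inv, Complex.log_mul (slitPlane_ne_zero hs) (inv_ne_zero (slitPlane_ne_zero hb)),
    Complex.log_inv _ hbp, sub_eq_add_neg (Complex.log _)]
  rw [Complex.arg_inv, if_neg hbp]
  rcases lt_trichotomy z.im 0 with h | h | h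
  · have h1 : (z - s).arg < 0 := Complex.arg_neg_iff.2 (by simpa using h)
    have h2 : (z - b).arg < 0 := Complex.arg_neg_iff.2 (by simpa using h)
    constructor <;> linarith
  · have h1 : (z - s).arg = 0 :=
      Complex.arg_eq_zero_iff.2 ⟨by simpa using (hz.resolve_left (by simpa)).1.le, by simpa using h⟩
    have h2 : (z - b).arg = 0 :=
      Complex.arg_eq_zero_iff.2 ⟨by simpa using (hz.resolve_left (by simpa)).2.le, by simpa using h⟩
    rw [h1, h2]; constructor <;> linarith [Real.pi_pos]
  · have h1 : 0 ≤ (z - s).arg := Complex.arg_nonneg_iff.2 (by simpa using h.le)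
    have h2 : 0 ≤ (z - b).arg := Complex.arg_nonneg_iff.2 (by simpa using h.le)
    constructor <;> linarith

theorem tendsto_log_jump {x s : ℝ} (hxs : s ≠ x) :
    Tendsto (fun ε : ℝ => Complex.log (x + ε * Complex.I - s) - Complex.log (x - ε * Complex.I - s))
      (𝓝[>] 0) (𝓝 (if x < s then 2 * π * Complex.I else 0)) := by
  have hlim : Tendsto (fun ε : ℝ => (x : ℂ) + ε * Complex.I - s) (𝓝[>] 0) (𝓝 ((x - s : ℝ) : ℂ)) := by
    have : ContinuousAt (fun ε : ℝ => (x : ℂ) + ε * Complex.I - s) 0 := by fun_prop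
    have h := this.tendsto
    simp only [ofReal_zero, zero_mul, add_zero] at h
    push_cast
    exact h.mono_left nhdsWithin_le_nhds
  have harg : Tendsto (fun ε : ℝ => ((x : ℂ) + ε * Complex.I - s).arg) (𝓝[>] 0)
      (𝓝 (if x < s then π else 0)) := by
    split_ifs with h
    · refine (Complex.tendsto_arg_nhdsWithin_im_nonneg_of_re_neg_of_im_zero
        (z := ((x - s : ℝ) : ℂ)) (by simpa using h) (by simp)).comp
        (tendsto_nhdsWithin_iff.2 ⟨hlim, ?_⟩)
      filter_upwards [self_mem_nhdsWithin] with ε hε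
      simpa using (mem_Ioi.1 hε).le
    · have hpos : 0 < x - s := sub_pos.2 (lt_of_le_of_ne (not_lt.1 h) hxs)
      have hc := (Complex.continuousAt_arg (x := ((x - s : ℝ) : ℂ))
        (Complex.ofReal_mem_slitPlane.2 hpos)).tendsto.comp hlim
      rwa [Complex.arg_ofReal_of_nonneg hpos.le] at hc
  have h2 := ((Complex.continuous_ofReal.tendsto _).comp harg).const_mul (2 * Complex.I)
  have h3 : 2 * Complex.I * (((if x < s then π else 0 : ℝ)) : ℂ)
      = if x < s then 2 * π * Complex.I else 0 := by
    split_ifs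
    · ring
    · simp
  rw [h3] at h2
  refine h2.congr' ?_
  filter_upwards [self_mem_nhdsWithin] with ε hε
  have := log_sub_log_conj (w := (x : ℂ) + ε * Complex.I - s) (by simpa using hε)
  simp only [map_sub, map_add, map_mul, Complex.conj_ofReal, Complex.conj_I] at this
  rw [Function.comp_apply, ← this]
  ring_nf

theorem norm_log_jump_le {x s ε : ℝ} (hε : 0 < ε) :
    ‖Complex.log (x + ε * Complex.I - s) - Complex.log (x - ε * Complex.I - s)‖ ≤ 2 * π := by
  have := log_sub_log_conj (w := (x : ℂ) + ε * Complex.I - s) (by simpa using hε)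
  simp only [map_sub, map_add, map_mul, Complex.conj_ofReal, Complex.conj_I, mul_neg,
    ← sub_eq_add_neg] at this
  rw [this]
  simpa using Complex.abs_arg_le_pi _

theorem continuousOn_log_sub {z : ℂ} {S : Set ℝ} (hz : z.im ≠ 0 ∨ ∀ s ∈ S, s < z.re) :
    ContinuousOn (fun s : ℝ => Complex.log (z - s)) S := by
  refine ContinuousOn.clog (by fun_prop) fun s hs => ?_
  rw [Complex.mem_slitPlane_iff]
  rcases hz with h | h
  · right; simpa using h
  · left; simpa using h s hs

/-- The jump across the real line of the logarithmic potential of an integrable density, by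
dominated convergence. -/
theorem tendsto_potential_jump {h : ℝ → ℝ} {a b : ℝ} (hint : IntervalIntegrable h volume a b)
    (x : ℝ) :
    Tendsto (fun ε : ℝ => (∫ s in a..b, (h s : ℂ) * Complex.log (x + ε * Complex.I - s))
        - ∫ s in a..b, (h s : ℂ) * Complex.log (x - ε * Complex.I - s)) (𝓝[>] 0)
      (𝓝 (∫ s in a..b, (h s : ℂ) * (if x < s then 2 * π * Complex.I else 0))) := by
  have hi : IntervalIntegrable (fun s => (h s : ℂ)) volume a b := ⟨hint.1.ofReal, hint.2.ofReal⟩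
  have hp : ∀ ε : ℝ, 0 < ε → IntervalIntegrable
      (fun s : ℝ => (h s : ℂ) * Complex.log (x + ε * Complex.I - s)) volume a b :=
    fun ε hε => hi.mul_continuousOn (continuousOn_log_sub (Or.inl (by simpa using hε.ne')))
  have hm : ∀ ε : ℝ, 0 < ε → IntervalIntegrable
      (fun s : ℝ => (h s : ℂ) * Complex.log (x - ε * Complex.I - s)) volume a b :=
    fun ε hε => hi.mul_continuousOn (continuousOn_log_sub (Or.inl (by simpa using hε.ne')))
  have hd := intervalIntegral.tendsto_integral_filter_of_dominated_convergence
    (μ := volume) (a := a) (b := b) (l := 𝓝[>] (0 : ℝ))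
    (F := fun (ε : ℝ) (s : ℝ) => (h s : ℂ) * Complex.log (x + ε * Complex.I - s)
      - (h s : ℂ) * Complex.log (x - ε * Complex.I - s))
    (f := fun s => (h s : ℂ) * (if x < s then 2 * π * Complex.I else 0))
    (fun s => |h s| * (2 * π)) ?_ ?_ ?_ ?_
  · refine hd.congr' ?_
    filter_upwards [self_mem_nhdsWithin] with ε hε
    exact intervalIntegral.integral_sub (hp ε hε) (hm ε hε)
  · filter_upwards [self_mem_nhdsWithin] with ε hε
    exact ((hp ε hε).sub (hm ε hε)).def'.aestronglyMeasurable
  · filter_upwards [self_mem_nhdsWithin] with ε hε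
    refine Eventually.of_forall fun s _ => ?_
    rw [← mul_sub, norm_mul, Complex.norm_real, Real.norm_eq_abs]
    exact mul_le_mul_of_nonneg_left (norm_log_jump_le hε) (abs_nonneg _)
  · exact hint.abs.mul_const _
  · have : ∀ᵐ s : ℝ, s ≠ x := by simp [ae_iff, measure_singleton]
    filter_upwards [this] with s hs _
    simpa only [mul_sub] using (tendsto_log_jump hs).const_mul (h s : ℂ)

/-! ### Holomorphy off the segment -/

/-- For `z` off the segment `[a,b]` and `s ∈ [a,b]`, the quotient `(z-s)/(z-b)` avoids the cut of
the logarithm: a quotient in `(-∞,0]` would put `z` between `s` and `b`. -/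
theorem div_mem_slitPlane {z : ℂ} {a b s : ℝ} (hz : ¬ (z.im = 0 ∧ a ≤ z.re ∧ z.re ≤ b))
    (hs : s ∈ Icc a b) : (z - s) / (z - b) ∈ slitPlane := by
  have hb : z - b ≠ 0 := by
    intro h
    have : z = b := sub_eq_zero.1 h
    exact hz (by simp [this, hs.1.trans hs.2])
  by_contra hn
  set t : ℂ := (z - s) / (z - b) with ht
  rw [Complex.mem_slitPlane_iff] at hn
  push Not at hn
  obtain ⟨r, hr⟩ : ∃ r : ℝ, t = -r := ⟨-t.re, by apply Complex.ext <;> simp [hn.2]⟩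
  have hr0 : 0 ≤ r := by
    have := hn.1; rw [hr] at this; simpa using this
  have e : z - s = -r * (z - b) := by rw [← hr, ht, div_mul_cancel₀ _ hb]
  have ere := congrArg Complex.re e
  have eim := congrArg Complex.im e
  simp at ere eim
  refine hz ⟨by nlinarith, ?_, ?_⟩ <;> nlinarith [hs.1, hs.2]

/-- Differentiation under the integral sign: on a small disc around `z₀` the derivative of
`log((z-s)/(z-b))`, namely `1/(z-s) - 1/(z-b)`, is bounded uniformly in `s ∈ [a,b]`. -/
theorem differentiableAt_log_div_potential {h : ℝ → ℝ} {a b : ℝ} (hab : a ≤ b)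
    (hint : IntervalIntegrable h volume a b) {z₀ : ℂ}
    (hz₀ : ¬ (z₀.im = 0 ∧ a ≤ z₀.re ∧ z₀.re ≤ b)) :
    DifferentiableAt ℂ (fun z : ℂ => ∫ s in a..b, (h s : ℂ) * Complex.log ((z - s) / (z - b)))
      z₀ := by
  have hi : IntervalIntegrable (fun s => (h s : ℂ)) volume a b := ⟨hint.1.ofReal, hint.2.ofReal⟩
  set U : Set ℂ := (Complex.ofReal '' Icc a b)ᶜ with hU
  have hUopen : IsOpen U := (isCompact_Icc.image Complex.continuous_ofReal).isClosed.isOpen_compl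
  have hzU : ∀ z : ℂ, z ∈ U → ¬ (z.im = 0 ∧ a ≤ z.re ∧ z.re ≤ b) := by
    rintro z hz ⟨h1, h2, h3⟩
    exact hz ⟨z.re, ⟨h2, h3⟩, by apply Complex.ext <;> simp [h1]⟩
  have hz₀U : z₀ ∈ U := by
    rintro ⟨s, hs, rfl⟩
    exact hz₀ ⟨by simp, by simpa using hs.1, by simpa using hs.2⟩
  obtain ⟨δ, hδ, hball⟩ := Metric.isOpen_iff.1 hUopen z₀ hz₀U
  have hsub : ∀ z ∈ Metric.ball z₀ (δ / 2), z ∈ U := fun z hz =>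
    hball (Metric.ball_subset_ball (by linarith) hz)
  have hne : ∀ z ∈ U, ∀ s ∈ Icc a b, z - s ≠ 0 := fun z hz s hs h0 =>
    hz ⟨s, hs, (sub_eq_zero.1 h0).symm⟩
  have hfar : ∀ z ∈ Metric.ball z₀ (δ / 2), ∀ s ∈ Icc a b, ‖(z - s)⁻¹‖ ≤ 2 / δ := by
    intro z hz s hs
    have h1 : δ ≤ dist (s : ℂ) z₀ := by
      by_contra hlt
      exact hball (Metric.mem_ball.2 (not_le.1 hlt)) ⟨s, hs, rfl⟩
    have h2 : δ / 2 ≤ ‖z - s‖ := by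
      rw [← dist_eq_norm]
      have := dist_triangle (s : ℂ) z z₀
      rw [dist_comm (s : ℂ) z] at this
      linarith [Metric.mem_ball.1 hz]
    rw [norm_inv]
    calc ‖z - s‖⁻¹ ≤ (δ / 2)⁻¹ := inv_anti₀ (by linarith) h2
      _ = 2 / δ := by rw [inv_div]
  have hIcc : ∀ s ∈ uIoc a b, s ∈ Icc a b := fun s hs => by
    rw [uIoc_of_le hab] at hs; exact Ioc_subset_Icc_self hs
  have hFint : ∀ z ∈ U, IntervalIntegrable
      (fun s : ℝ => (h s : ℂ) * Complex.log ((z - s) / (z - b))) volume a b := by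
    intro z hz
    refine hi.mul_continuousOn (ContinuousOn.clog (by fun_prop) fun s hs => ?_)
    rw [uIcc_of_le hab] at hs
    exact div_mem_slitPlane (hzU z hz) hs
  refine (intervalIntegral.hasDerivAt_integral_of_dominated_loc_of_deriv_le (𝕜 := ℂ)
    (F' := fun z s => (h s : ℂ) * ((z - s)⁻¹ - (z - b)⁻¹))
    (bound := fun s => |h s| * (2 / δ + 2 / δ))
    (Metric.ball_mem_nhds z₀ (half_pos hδ)) ?_ (hFint z₀ hz₀U) ?_ ?_ ?_ ?_).2.differentiableAt
  · filter_upwards [hUopen.mem_nhds hz₀U] with z hz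
    exact (hFint z hz).def'.aestronglyMeasurable
  · refine (hi.mul_continuousOn ((ContinuousOn.inv₀ (f := fun s : ℝ => z₀ - (s : ℂ)) (by fun_prop)
      fun s hs => ?_).fun_sub continuousOn_const)).def'.aestronglyMeasurable
    rw [uIcc_of_le hab] at hs
    exact hne z₀ hz₀U s hs
  · refine Eventually.of_forall fun s hs z hz => ?_
    rw [norm_mul, Complex.norm_real, Real.norm_eq_abs]
    exact mul_le_mul_of_nonneg_left ((norm_sub_le _ _).trans
      (add_le_add (hfar z hz s (hIcc s hs)) (hfar z hz b (right_mem_Icc.2 hab)))) (abs_nonneg _)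
  · exact hint.abs.mul_const _
  · refine Eventually.of_forall fun s hs z hz => ?_
    have hzs := hne z (hsub z hz) s (hIcc s hs)
    have hzb := hne z (hsub z hz) b (right_mem_Icc.2 hab)
    have hd := ((((hasDerivAt_id' z).sub_const (s : ℂ)).fun_div
      ((hasDerivAt_id' z).sub_const (b : ℂ)) hzb).clog
      (div_mem_slitPlane (hzU z (hsub z hz)) (hIcc s hs))).const_mul (h s : ℂ)
    refine hd.congr_deriv ?_
    congr 1
    field_simp

/-! ### The potential `g̃` -/

/-- `g̃` is the logarithmic potential of the signed density `μ - 1/c`, which is supported on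
`[a,b]`. Here `L` stands for `s ↦ log(z-s)`. -/
theorem potential_sub_eq {c a b : ℝ} (ha0 : 0 ≤ a) (hab : a ≤ b) (hb1 : b ≤ 1) {μ : ℝ → ℝ}
    (hcont : ContinuousOn μ (Icc a b))
    (hμout : ∀ x, (0 ≤ x ∧ x ≤ a) ∨ (b ≤ x ∧ x ≤ 1) → μ x = 1 / c)
    {L : ℝ → ℂ} (hL : ContinuousOn L (Icc 0 1)) :
    (∫ s in (0 : ℝ)..1, (μ s : ℂ) * L s) - (∫ s in (0 : ℝ)..1, L s) / (c : ℂ)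
      = ∫ s in a..b, ((μ s - 1 / c : ℝ) : ℂ) * L s := by
  have hl : ∀ s ∈ uIcc 0 a, μ s - 1 / c = 0 := fun s hs => by
    rw [uIcc_of_le ha0] at hs; rw [hμout s (Or.inl hs), sub_self]
  have hr : ∀ s ∈ uIcc b 1, μ s - 1 / c = 0 := fun s hs => by
    rw [uIcc_of_le hb1] at hs; rw [hμout s (Or.inr hs), sub_self]
  set f : ℝ → ℂ := fun s => ((μ s - 1 / c : ℝ) : ℂ) * L s with hf
  have hLi : IntervalIntegrable L volume 0 1 :=
    (hL.mono (by rw [uIcc_of_le zero_le_one])).intervalIntegrable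
  have hl0 : EqOn (fun _ => 0) f (uIcc 0 a) := fun s hs => by simp only [hf, hl s hs]; simp
  have hr0 : EqOn (fun _ => 0) f (uIcc b 1) := fun s hs => by simp only [hf, hr s hs]; simp
  have i1 : IntervalIntegrable f volume 0 a :=
    IntervalIntegrable.congr (hl0.mono uIoc_subset_uIcc) (by simp)
  have i3 : IntervalIntegrable f volume b 1 :=
    IntervalIntegrable.congr (hr0.mono uIoc_subset_uIcc) (by simp)
  have i2 : IntervalIntegrable f volume a b := by
    refine ContinuousOn.intervalIntegrable ?_
    rw [uIcc_of_le hab]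
    exact (Complex.continuous_ofReal.comp_continuousOn (hcont.sub continuousOn_const)).mul
      (hL.mono (Icc_subset_Icc ha0 hb1))
  have hLc := hLi.div_const (c : ℂ)
  have hμL : IntervalIntegrable (fun s => (μ s : ℂ) * L s) volume 0 1 := by
    refine IntervalIntegrable.congr (fun s _ => ?_) (((i1.trans i2).trans i3).add hLc)
    simp only [hf]; push_cast; ring
  calc _ = ∫ s in (0 : ℝ)..1, f s := by
        rw [← intervalIntegral.integral_div, ← intervalIntegral.integral_sub hμL hLc]
        congr 1; ext s; simp only [hf]; push_cast; ring
    _ = _ := by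
        rw [← intervalIntegral.integral_add_adjacent_intervals (i1.trans i2) i3,
          ← intervalIntegral.integral_add_adjacent_intervals i1 i2,
          ← intervalIntegral.integral_congr hl0, ← intervalIntegral.integral_congr hr0]
        simp

/-- jump relations for `g̃ = g − varphi/c` across the real axis, and the
analytic continuation of `e^{n g̃}` to `ℂ∖[a,b]` when `n/N = c`. -/
theorem g_tilde_jumps_and_extension
    (c : ℝ) (hc0 : 0 < c) (hc1 : c < 1)
    (a b : ℝ)
    (ha : a = (1 - Real.sqrt (1 - c ^ 2)) / 2)
    (hb : b = (1 + Real.sqrt (1 - c ^ 2)) / 2)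
    (μ : ℝ → ℝ)
    (hμab : ∀ x, a < x → x < b →
      μ x = (2 / (π * c)) * Real.arcsin (c / (2 * Real.sqrt (x - x ^ 2))))
    (hμout : ∀ x, (0 ≤ x ∧ x ≤ a) ∨ (b ≤ x ∧ x ≤ 1) → μ x = 1 / c)
    (g varphi : ℂ → ℂ)
    (hg : ∀ z, g z = ∫ s in (0:ℝ)..1, (μ s : ℂ) * Complex.log (z - s))
    (hvarphi : ∀ z, varphi z = ∫ s in (0:ℝ)..1, Complex.log (z - s))
    (gt : ℂ → ℂ)
    (hgt : ∀ z, gt z = g z - varphi z / (c:ℂ))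
    (gtp gtm : ℝ → ℂ)
    (hgtp : ∀ x : ℝ, Tendsto (fun ε : ℝ => gt (↑x + ↑ε * Complex.I)) (𝓝[>] 0) (𝓝 (gtp x)))
    (hgtm : ∀ x : ℝ, Tendsto (fun ε : ℝ => gt (↑x - ↑ε * Complex.I)) (𝓝[>] 0) (𝓝 (gtm x))) :
    -- jump on (−∞,0) and (0,a)
    (∀ x : ℝ, x < 0 ∨ (0 < x ∧ x < a) →
        gtp x - gtm x = 2 * (Real.pi : ℂ) * Complex.I * (1 - 1/(c:ℂ)))
    -- jump on (a,b)
    ∧ (∀ x : ℝ, a < x → x < b →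
        gtp x - gtm x = 2 * (Real.pi : ℂ) * Complex.I *
          ((∫ s in x..b, (μ s - 1/c) : ℝ) : ℂ))
    -- no jump on (b,1)
    ∧ (∀ x : ℝ, b < x → x < 1 → gtp x - gtm x = 0)
    -- analytic extension of e^{n g̃} to ℂ∖[a,b]
    ∧ (∀ n N : ℕ, 0 < n → n < N → (n : ℝ) = c * N →
        ∃ F : ℂ → ℂ,
          AnalyticOnNhd ℂ F {z : ℂ | ¬ (z.im = 0 ∧ a ≤ z.re ∧ z.re ≤ b)} ∧
          ∀ z : ℂ, ¬ (z.im = 0 ∧ z.re ≤ 1) → F z = Complex.exp ((n:ℂ) * gt z)) := by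
  have hR : 0 < √(1 - c ^ 2) := Real.sqrt_pos.2 (by nlinarith)
  have hR1 : √(1 - c ^ 2) < 1 := by
    rw [Real.sqrt_lt' one_pos]; nlinarith
  have ha0 : 0 < a := by linarith
  have hab : a < b := by linarith
  have hb1 : b < 1 := by linarith
  obtain ⟨hcont, hmass⟩ := density_continuousOn_and_mass hc0 hc1 ha hb hμab
    (hμout a (Or.inl ⟨ha0.le, le_rfl⟩)) (hμout b (Or.inr ⟨le_rfl, hb1.le⟩))
  have hhc : ContinuousOn (fun s => μ s - 1 / c) (Icc a b) := hcont.sub continuousOn_const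
  have hint : IntervalIntegrable (fun s => μ s - 1 / c) volume a b :=
    (hhc.mono (by rw [uIcc_of_le hab.le])).intervalIntegrable
  have hpot : ∀ z : ℂ, z.im ≠ 0 ∨ 1 < z.re →
      gt z = ∫ s in a..b, ((μ s - 1 / c : ℝ) : ℂ) * Complex.log (z - s) := by
    intro z hz
    rw [hgt, hg, hvarphi]
    exact potential_sub_eq ha0.le hab.le hb1.le hcont hμout (continuousOn_log_sub
      (hz.imp_right fun h s hs => hs.2.trans_lt h))
  have hjump : ∀ x : ℝ, gtp x - gtm x =
      ∫ s in a..b, ((μ s - 1 / c : ℝ) : ℂ) * (if x < s then 2 * π * Complex.I else 0) := by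
    intro x
    refine tendsto_nhds_unique (((hgtp x).sub (hgtm x)).congr' ?_) (tendsto_potential_jump hint x)
    filter_upwards [self_mem_nhdsWithin] with ε hε
    have hε' : ε ≠ 0 := (mem_Ioi.1 hε).ne'
    rw [hpot _ (Or.inl (by simpa using hε')), hpot _ (Or.inl (by simpa using hε'))]
  have hright : ∀ x p : ℝ, x ≤ p → p ≤ b →
      ∫ s in p..b, ((μ s - 1 / c : ℝ) : ℂ) * (if x < s then 2 * π * Complex.I else 0)
        = 2 * π * Complex.I * ((∫ s in p..b, (μ s - 1 / c) : ℝ) : ℂ) := by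
    intro x p hxp hpb
    rw [← intervalIntegral.integral_ofReal, mul_comm (2 * (π : ℂ) * Complex.I) (∫ _ in _.._, _),
      ← intervalIntegral.integral_mul_const]
    refine intervalIntegral.integral_congr_ae (Eventually.of_forall fun s hs => ?_)
    rw [uIoc_of_le hpb] at hs
    rw [if_pos (hxp.trans_lt hs.1)]
  have hleft : ∀ x q : ℝ, a ≤ q → q ≤ x →
      ∫ s in a..q, ((μ s - 1 / c : ℝ) : ℂ) * (if x < s then 2 * π * Complex.I else 0) = 0 := by
    intro x q haq hqx
    rw [intervalIntegral.integral_congr (g := fun _ => 0), intervalIntegral.integral_zero]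
    intro s hs
    rw [uIcc_of_le haq] at hs
    simp only [if_neg (not_lt.2 (hs.2.trans hqx)), mul_zero]
  refine ⟨fun x hx => ?_, fun x hax hxb => ?_, fun x hbx _ => ?_, fun n N hn hnN hnc => ?_⟩
  · have hxa : x ≤ a := by rcases hx with h | h <;> linarith
    rw [hjump, hright x a hxa hab.le, hmass]
    push_cast; ring
  -- the pieces must be integrable before the integral may be split at `x`
  · have hii : ∀ p q : ℝ, a ≤ p → p ≤ q → q ≤ b → IntervalIntegrable
        (fun s : ℝ => ((μ s - 1 / c : ℝ) : ℂ) * (if x < s then 2 * π * Complex.I else 0))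
        volume p q := by
      intro p q hp hpq hq
      have h0 : IntervalIntegrable (fun s : ℝ => ((μ s - 1 / c : ℝ) : ℂ)) volume p q := by
        refine ContinuousOn.intervalIntegrable ?_
        rw [uIcc_of_le hpq]
        exact Complex.continuous_ofReal.comp_continuousOn (hhc.mono (Icc_subset_Icc hp hq))
      rw [intervalIntegrable_iff] at h0 ⊢
      refine Integrable.mul_bdd (c := 2 * π) h0 ?_ (Eventually.of_forall fun s => ?_)
      · exact (Measurable.ite measurableSet_Ioi measurable_const
          measurable_const).aestronglyMeasurable
      · split_ifs
        · simp [abs_of_pos Real.pi_pos]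
        · simpa using Real.pi_pos.le
    rw [hjump, ← intervalIntegral.integral_add_adjacent_intervals
      (hii a x le_rfl hax.le hxb.le) (hii x b hax.le hxb.le le_rfl),
      hleft x x hax.le le_rfl, hright x x le_rfl hxb.le, zero_add]
  · rw [hjump, hleft x b hab.le hbx.le]
  · refine ⟨fun z => Complex.exp (n * ∫ s in a..b, ((μ s - 1 / c : ℝ) : ℂ) *
      Complex.log ((z - s) / (z - b))) * (z - b) ^ ((n : ℤ) - N), ?_, ?_⟩
    · have hopen : IsOpen {z : ℂ | ¬ (z.im = 0 ∧ a ≤ z.re ∧ z.re ≤ b)} := by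
        have hcl : IsClosed {z : ℂ | z.im = 0 ∧ a ≤ z.re ∧ z.re ≤ b} :=
          (isClosed_eq Complex.continuous_im continuous_const).inter
            ((isClosed_le continuous_const Complex.continuous_re).inter
              (isClosed_le Complex.continuous_re continuous_const))
        exact hcl.isOpen_compl
      refine DifferentiableOn.analyticOnNhd (fun z hz => ?_) hopen
      have hzb : z - b ≠ 0 := by
        intro h
        have : z = b := sub_eq_zero.1 h
        exact hz (by simp [this, hab.le])
      refine DifferentiableAt.differentiableWithinAt ?_
      exact (((differentiableAt_log_div_potential hab.le hint hz).const_mul _).cexp).mul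
        ((differentiableAt_id.sub_const _).zpow (Or.inl hzb))
    · intro z hz
      have hz' : z.im ≠ 0 ∨ 1 < z.re := by
        by_cases h : z.im = 0
        · exact Or.inr (not_le.1 fun h1 => hz ⟨h, h1⟩)
        · exact Or.inl h
      have hzb : z - b ≠ 0 := by
        intro h
        have : z = b := sub_eq_zero.1 h
        exact hz (by simp [this, hb1.le])
      have hlog : ContinuousOn (fun s : ℝ => Complex.log (z - s)) (uIcc a b) :=
        continuousOn_log_sub (hz'.imp_right fun h s hs => by
          rw [uIcc_of_le hab.le] at hs; linarith [hs.2])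
      have hi : IntervalIntegrable (fun s : ℝ => ((μ s - 1 / c : ℝ) : ℂ)) volume a b :=
        ⟨hint.1.ofReal, hint.2.ofReal⟩
      have hsplit : ∫ s in a..b, ((μ s - 1 / c : ℝ) : ℂ) * Complex.log ((z - s) / (z - b))
          = gt z - (1 - 1 / (c : ℂ)) * Complex.log (z - b) := by
        have hm : ((∫ s in a..b, ((μ s - 1 / c : ℝ) : ℂ)) : ℂ) = 1 - 1 / (c : ℂ) := by
          rw [intervalIntegral.integral_ofReal, hmass]; push_cast; rfl
        rw [hpot z hz', ← hm, ← intervalIntegral.integral_mul_const,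
          ← intervalIntegral.integral_sub (hi.mul_continuousOn hlog) (hi.mul_const _)]
        refine intervalIntegral.integral_congr fun s hs => ?_
        rw [uIcc_of_le hab.le] at hs
        rw [log_div_eq_sub (hz'.imp_right fun h => ⟨by linarith [hs.2], by linarith⟩), mul_sub]
      -- because `n / c = N`
      have hnN' : (n : ℂ) * (1 - 1 / (c : ℂ)) = (((n : ℤ) - N : ℤ) : ℂ) := by
        have hcc : (c : ℂ) ≠ 0 := by exact_mod_cast hc0.ne'
        have : (n : ℂ) = c * N := by exact_mod_cast hnc
        push_cast
        field_simp
        rw [this]; ring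
      beta_reduce
      rw [hsplit, mul_sub, ← mul_assoc, hnN', Complex.exp_sub, Complex.exp_int_mul,
        Complex.exp_log hzb, div_mul_cancel₀ _ (zpow_ne_zero _ hzb)]
end

section
/- Fix α, β > −1, a rational c ∈ (0,1), and a real number x with x > −1/2 and x not a nonnegative integer. Then, as n → ∞ through positive integers such that N := n/c is a positive integer, Q_n(x; α, β, N−1) ~ −( Γ(α+1)·Γ(N−n) / (π·Γ(N)·e^{n}·n^{2x+2α+2}) ) · (1+c)^{n+N+α+β+1/2} · N^{x+n+α+1} · Γ(x+1) · sin(πx), i.e. the ratio of the two sides tends to 1. -/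
/-!
The proof is a discrete Laplace argument in which the total mass is known exactly.

Since `(-n)_k / (-(N-1))_k` and `(n+a)_k / k!` (with `a = α + β + 1`) combine, up to a factor
independent of `k`, into the beta-binomial weight `w_k = (n+a)_k (N-n)_{n-k} / (k! (n-k)!)`, the
Hahn polynomial is `n! Γ(N-n) / Γ(N)` times `∑ w_k h(k)` with `h(k) = (-x)_k / (α+1)_k`
(`hahnQR_eq_sum`).
The Chu–Vandermonde identity gives `∑ w_k = (N+a)_n / n!` (`sum_bbWeight`).

The weights concentrate near `k = c n`: the ratio `w_{k+1} / w_k` is at least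
`1 / (1 - δ/6)` for `k ≤ (c-δ) n` and at most `1 - δ/6` for `k ≥ (c+δ) n`, so the mass at
distance more than `2 δ n` from `c n` is exponentially small (`bbWeight_tail`). By Euler's limit
formula, `h(k) ∼ C k^{-(x+α+1)}` with `C = Γ(α+1) / Γ(-x)`, which is nonzero because `x` is not a
nonnegative integer. Hence the weighted mean of `h` is `∼ C (c n)^{-(x+α+1)}`
(`bbWeight_average`); the reflection formula turns `1 / Γ(-x)` into `-Γ(x+1) sin(πx) / π`, and
`c n = n² / N` produces the stated powers of `n` and `N`. Finally Stirling's formula, applied to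
`(a+1)_{N+n} / (a+1)_N`, gives the asymptotics of `(N+a)_n` (`tendsto_total_weight`).
-/

open Real Filter

/-- The Pochhammer symbol `(y)_k = y(y+1)⋯(y+k−1)` for a real argument. -/
noncomputable def pochR (y : ℝ) (k : ℕ) : ℝ := ∏ i ∈ Finset.range k, (y + i)

/-- The Hahn polynomial
`Q_n(x;α,β,M) = Σ_{k=0}^n (−n)_k(−x)_k(n+α+β+1)_k / ((−M)_k(α+1)_k k!)`,
evaluated at a real argument `x`. -/
noncomputable def hahnQR (n : ℕ) (α β : ℝ) (M : ℕ) (x : ℝ) : ℝ :=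
  ∑ k ∈ Finset.range (n + 1),
    pochR (-(n:ℝ)) k * pochR (-x) k * pochR ((n:ℝ) + α + β + 1) k /
      (pochR (-(M:ℝ)) k * pochR (α + 1) k * (Nat.factorial k : ℝ))

/-! ### Beta-binomial weights and the Chu–Vandermonde identity -/

lemma pochR_succ (y : ℝ) (k : ℕ) : pochR y (k + 1) = pochR y k * (y + k) := by
  simp [pochR, Finset.prod_range_succ]

lemma pochR_zero (y : ℝ) : pochR y 0 = 1 := by simp [pochR]

lemma pochR_pos {y : ℝ} (hy : 0 < y) (k : ℕ) : 0 < pochR y k :=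
  Finset.prod_pos fun i _ => by positivity

lemma pochR_neg_natCast (n k : ℕ) (hk : k ≤ n) :
    pochR (-(n : ℝ)) k * (n - k).factorial = (-1) ^ k * n.factorial := by
  induction k with
  | zero => simp [pochR_zero]
  | succ k ih =>
    have h := ih (by omega)
    obtain ⟨m, rfl⟩ : ∃ m, n = k + 1 + m := ⟨n - (k + 1), by omega⟩
    rw [show k + 1 + m - k = m + 1 by omega] at h
    rw [show k + 1 + m - (k + 1) = m by omega, pochR_succ, pow_succ]
    rw [Nat.factorial_succ] at h
    push_cast at h ⊢
    linear_combination -h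

lemma pochR_natCast_succ (m j : ℕ) :
    pochR ((m : ℝ) + 1) j * m.factorial = (m + j).factorial := by
  induction j with
  | zero => simp [pochR_zero]
  | succ j ih =>
    rw [pochR_succ, ← add_assoc, Nat.factorial_succ]
    push_cast
    linear_combination ((m : ℝ) + j + 1) * ih

/-- The unnormalised beta-binomial weight `(A)_k (B)_{n-k} / (k! (n-k)!)`. -/
noncomputable def bbWeight (A B : ℝ) (n k : ℕ) : ℝ :=
  pochR A k / k.factorial * (pochR B (n - k) / (n - k).factorial)

lemma bbWeight_nonneg {A B : ℝ} (hA : 0 < A) (hB : 0 < B) (n k : ℕ) : 0 ≤ bbWeight A B n k := by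
  have := pochR_pos hA k
  have := pochR_pos hB (n - k)
  unfold bbWeight
  positivity

/-- The ratio of consecutive weights, cleared of denominators. -/
lemma bbWeight_succ (A B : ℝ) (n k : ℕ) (hk : k < n) :
    bbWeight A B n (k + 1) * ((k + 1) * (B + n - k - 1)) =
      bbWeight A B n k * ((A + k) * (n - k)) := by
  obtain ⟨m, rfl⟩ : ∃ m, n = k + 1 + m := ⟨n - (k + 1), by omega⟩
  unfold bbWeight
  rw [show k + 1 + m - k = m + 1 by omega, show k + 1 + m - (k + 1) = m by omega,
    pochR_succ, pochR_succ, Nat.factorial_succ, Nat.factorial_succ]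
  push_cast
  field_simp
  ring

/-- The Chu–Vandermonde identity, for arbitrary real parameters. -/
lemma sum_bbWeight (A B : ℝ) (n : ℕ) :
    ∑ k ∈ Finset.range (n + 1), bbWeight A B n k = pochR (A + B) n / n.factorial := by
  have key : ∀ n : ℕ, ∑ p ∈ Finset.HasAntidiagonal.antidiagonal n,
      pochR A p.1 / p.1.factorial * (pochR B p.2 / p.2.factorial) =
        pochR (A + B) n / n.factorial := by
    intro n
    induction n with
    | zero => simp [pochR_zero]
    | succ n ih =>
      have hstep : ∀ (C : ℝ) (k : ℕ), ((k : ℝ) + 1) * (pochR C (k + 1) / (k + 1).factorial) =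
          (C + k) * (pochR C k / k.factorial) := by
        intro C k
        rw [pochR_succ, Nat.factorial_succ]
        push_cast
        field_simp
      -- Split the factor `n + 1` as `i + j` over the antidiagonal `i + j = n + 1`.
      have h1 : ((n : ℝ) + 1) * ∑ p ∈ Finset.HasAntidiagonal.antidiagonal (n + 1),
          pochR A p.1 / p.1.factorial * (pochR B p.2 / p.2.factorial) =
          ∑ p ∈ Finset.HasAntidiagonal.antidiagonal (n + 1),
            (p.1 : ℝ) * (pochR A p.1 / p.1.factorial) * (pochR B p.2 / p.2.factorial) +
          ∑ p ∈ Finset.HasAntidiagonal.antidiagonal (n + 1),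
            pochR A p.1 / p.1.factorial * ((p.2 : ℝ) * (pochR B p.2 / p.2.factorial)) := by
        rw [Finset.mul_sum, ← Finset.sum_add_distrib]
        refine Finset.sum_congr rfl fun p hp => ?_
        have : ((p.1 : ℝ) + p.2) = n + 1 := by
          exact_mod_cast Finset.HasAntidiagonal.mem_antidiagonal.mp hp
        rw [← this]; ring
      have h2 : ∑ p ∈ Finset.HasAntidiagonal.antidiagonal (n + 1),
            (p.1 : ℝ) * (pochR A p.1 / p.1.factorial) * (pochR B p.2 / p.2.factorial) =
          ∑ p ∈ Finset.HasAntidiagonal.antidiagonal n,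
            (A + p.1) * (pochR A p.1 / p.1.factorial) * (pochR B p.2 / p.2.factorial) := by
        rw [Finset.Nat.sum_antidiagonal_succ]
        simp only [Nat.cast_zero, zero_mul, zero_add]
        refine Finset.sum_congr rfl fun p _ => ?_
        rw [← hstep]; push_cast; ring
      have h3 : ∑ p ∈ Finset.HasAntidiagonal.antidiagonal (n + 1),
            pochR A p.1 / p.1.factorial * ((p.2 : ℝ) * (pochR B p.2 / p.2.factorial)) =
          ∑ p ∈ Finset.HasAntidiagonal.antidiagonal n,
            pochR A p.1 / p.1.factorial * ((B + p.2) * (pochR B p.2 / p.2.factorial)) := by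
        rw [Finset.Nat.sum_antidiagonal_succ']
        simp only [Nat.cast_zero, zero_mul, mul_zero, zero_add]
        refine Finset.sum_congr rfl fun p _ => ?_
        rw [← hstep]; push_cast; ring
      have h4 : ((n : ℝ) + 1) * ∑ p ∈ Finset.HasAntidiagonal.antidiagonal (n + 1),
          pochR A p.1 / p.1.factorial * (pochR B p.2 / p.2.factorial) =
          ((n : ℝ) + 1) * (pochR (A + B) (n + 1) / (n + 1).factorial) := by
        rw [h1, h2, h3, hstep, ← ih, Finset.mul_sum, ← Finset.sum_add_distrib]
        refine Finset.sum_congr rfl fun p hp => ?_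
        have : ((p.1 : ℝ) + p.2) = n := by
          exact_mod_cast Finset.HasAntidiagonal.mem_antidiagonal.mp hp
        rw [← this]; ring
      exact mul_left_cancel₀ (by positivity) h4
  rw [← key n, Finset.Nat.sum_antidiagonal_eq_sum_range_succ_mk]
  rfl

/-- The Hahn polynomial as a beta-binomial sum of the test function `(-x)_k / (α+1)_k`. -/
lemma hahnQR_eq_sum (n N : ℕ) (hnN : n < N) (α β x : ℝ) :
    hahnQR n α β (N - 1) x =
      n.factorial * (N - n - 1).factorial / (N - 1).factorial *
        ∑ k ∈ Finset.range (n + 1), bbWeight (n + α + β + 1) (N - n) n k *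
          (pochR (-x) k / pochR (α + 1) k) := by
  obtain ⟨d, rfl⟩ : ∃ d, N = n + d + 1 := ⟨N - n - 1, by omega⟩
  rw [show n + d + 1 - n - 1 = d by omega, Nat.add_sub_cancel]
  unfold hahnQR
  rw [Finset.mul_sum]
  refine Finset.sum_congr rfl fun k hk => ?_
  have hk' : k ≤ n := by simpa [Nat.lt_succ_iff] using hk
  have e1 := pochR_neg_natCast n k hk'
  have e2 := pochR_neg_natCast (n + d) k (by omega)
  have e3 := pochR_natCast_succ d (n - k)
  rw [show d + (n - k) = n + d - k by omega] at e3
  unfold bbWeight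
  rw [show ((n + d + 1 : ℕ) : ℝ) - n = d + 1 by push_cast; ring]
  have f1 : ((n - k).factorial : ℝ) ≠ 0 := by positivity
  have f2 : ((n + d - k).factorial : ℝ) ≠ 0 := by positivity
  have f3 : (d.factorial : ℝ) ≠ 0 := by positivity
  have f4 : ((n + d).factorial : ℝ) ≠ 0 := by positivity
  have f5 : (k.factorial : ℝ) ≠ 0 := by positivity
  have g1 : pochR (-(n : ℝ)) k = (-1) ^ k * n.factorial / (n - k).factorial := by
    rw [eq_div_iff f1, e1]
  have g2 : pochR (-((n + d : ℕ) : ℝ)) k = (-1) ^ k * (n + d).factorial / (n + d - k).factorial := by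
    rw [eq_div_iff f2, e2]
  have g3 : pochR ((d : ℝ) + 1) (n - k) = (n + d - k).factorial / d.factorial := by
    rw [eq_div_iff f3, e3]
  rw [g1, g2, g3]
  have s : ((-1 : ℝ)) ^ k ≠ 0 := by simp
  field_simp

/-! ### Concentration of the weights -/

section Tail

variable {a c δ : ℝ} {n N : ℕ}

/-- Well below the mode `k ≈ c n`, the weights grow geometrically. -/
lemma bbWeight_le_succ (hc1 : c < 1) (hδ : 0 < δ) (ha : -1 < a) (hnN : (n : ℝ) = c * N)
    (hn : 2 * (|a| + 1) ≤ δ * n) (hn' : |a| ≤ n) (hlt : n < N) {k : ℕ} (hk : k < n)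
    (hkc : (k : ℝ) ≤ (c - δ) * n) :
    bbWeight (n + a) (N - n) n k ≤ (1 - δ / 6) * bbWeight (n + a) (N - n) n (k + 1) := by
  have hs := bbWeight_succ (n + a) (N - n) n k hk
  have hk1 : (k : ℝ) + 1 ≤ n := by exact_mod_cast hk
  have hlt1 : (n : ℝ) + 1 ≤ N := by exact_mod_cast hlt
  have hn1 : (1 : ℝ) ≤ n := by exact_mod_cast (by omega : 1 ≤ n)
  have hk0 : (0 : ℝ) ≤ k := by positivity
  have ha1 := le_abs_self a
  have ha2 := neg_abs_le a
  have hw := bbWeight_nonneg (A := n + a) (B := N - n) (by linarith) (by linarith) n (k + 1)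
  set w0 := bbWeight (n + a) (N - n) n k
  set w1 := bbWeight (n + a) (N - n) n (k + 1)
  -- The gap `(n+a+k)(n-k) - (k+1)(N-k-1) = n² - kN + a(n-k) - N + 2k + 1` is at least `δ n N / 2`,
  -- while `(n+a+k)(n-k) ≤ 3 n N`: this is where the factor `1 - δ/6` comes from.
  have hnum : 0 < ((n : ℝ) + a + k) * (n - k) := mul_pos (by linarith) (by linarith)
  have hkN : (k : ℝ) * N ≤ n * n - δ * (n * N) := by
    have : (k : ℝ) * N ≤ (c - δ) * n * N := mul_le_mul_of_nonneg_right hkc (by linarith)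
    nlinarith
  have hank : -(|a| * N) ≤ a * (n - k) := by
    have h1 : -(|a| * (n - k)) ≤ a * (n - k) := by nlinarith
    have h2 : |a| * (n - k) ≤ |a| * N := mul_le_mul_of_nonneg_left (by linarith) (abs_nonneg a)
    linarith
  have hdn : 2 * (|a| + 1) * N ≤ δ * n * N := mul_le_mul_of_nonneg_right hn (by linarith)
  have hdiff : δ / 2 * (n * N) ≤ ((n : ℝ) + a + k) * (n - k) - (k + 1) * (N - n + n - k - 1) := by
    nlinarith
  have hub : ((n : ℝ) + a + k) * (n - k) ≤ 3 * (n * N) := by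
    have h1 : ((n : ℝ) + a + k) * (n - k) ≤ (3 * n) * n :=
      mul_le_mul (by linarith) (by linarith) (by linarith) (by linarith)
    nlinarith
  have hden : ((k : ℝ) + 1) * (N - n + n - k - 1) ≤ (1 - δ / 6) * (((n : ℝ) + a + k) * (n - k)) := by
    nlinarith
  refine le_of_mul_le_mul_right ?_ hnum
  rw [← hs]
  calc w1 * (((k : ℝ) + 1) * (N - n + n - k - 1))
      ≤ w1 * ((1 - δ / 6) * (((n : ℝ) + a + k) * (n - k))) := mul_le_mul_of_nonneg_left hden hw
    _ = _ := by ring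

/-- Well above the mode `k ≈ c n`, the weights decay geometrically. -/
lemma bbWeight_succ_le (hδ : 0 < δ) (ha : -1 < a) (hnN : (n : ℝ) = c * N)
    (hn : 2 * (|a| + 1) ≤ δ * n) (hlt : n < N) {k : ℕ} (hk : k < n)
    (hkc : (c + δ) * n ≤ (k : ℝ)) :
    bbWeight (n + a) (N - n) n (k + 1) ≤ (1 - δ / 6) * bbWeight (n + a) (N - n) n k := by
  have hs := bbWeight_succ (n + a) (N - n) n k hk
  have hk1 : (k : ℝ) + 1 ≤ n := by exact_mod_cast hk
  have hlt1 : (n : ℝ) + 1 ≤ N := by exact_mod_cast hlt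
  have hn1 : (1 : ℝ) ≤ n := by exact_mod_cast (by omega : 1 ≤ n)
  have hk0 : (0 : ℝ) ≤ k := by positivity
  have ha1 := le_abs_self a
  have ha2 := neg_abs_le a
  have hw := bbWeight_nonneg (A := n + a) (B := N - n) (by linarith) (by linarith) n k
  set w0 := bbWeight (n + a) (N - n) n k
  set w1 := bbWeight (n + a) (N - n) n (k + 1)
  have hdenpos : 0 < ((k : ℝ) + 1) * (N - n + n - k - 1) := mul_pos (by linarith) (by linarith)
  have hkN : n * n + δ * (n * N) ≤ (k : ℝ) * N := by
    have : (c + δ) * n * N ≤ (k : ℝ) * N := mul_le_mul_of_nonneg_right hkc (by linarith)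
    nlinarith
  have hank : a * (n - k) ≤ |a| * N := by
    have h1 : a * (n - k) ≤ |a| * (n - k) := mul_le_mul_of_nonneg_right ha1 (by linarith)
    have h2 : |a| * (n - k) ≤ |a| * N := mul_le_mul_of_nonneg_left (by linarith) (abs_nonneg a)
    linarith
  have hdn : 2 * (|a| + 1) * N ≤ δ * n * N := mul_le_mul_of_nonneg_right hn (by linarith)
  have hdiff : δ / 2 * (n * N) ≤ (k + 1) * (N - n + n - k - 1) - ((n : ℝ) + a + k) * (n - k) := by
    nlinarith
  have hub : ((k : ℝ) + 1) * (N - n + n - k - 1) ≤ n * N :=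
    mul_le_mul hk1 (by linarith) (by linarith) (by linarith)
  have hnum : ((n : ℝ) + a + k) * (n - k) ≤ (1 - δ / 6) * (((k : ℝ) + 1) * (N - n + n - k - 1)) := by
    have : (0 : ℝ) ≤ n * N := by positivity
    nlinarith
  refine le_of_mul_le_mul_right ?_ hdenpos
  rw [hs]
  calc w0 * (((n : ℝ) + a + k) * (n - k))
      ≤ w0 * ((1 - δ / 6) * (((k : ℝ) + 1) * (N - n + n - k - 1))) :=
        mul_le_mul_of_nonneg_left hnum hw
    _ = _ := by ring

/-- Exponential concentration of the beta-binomial weights around `k = c n`. -/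
lemma bbWeight_tail (hc1 : c < 1) (hδ : 0 < δ) (hδ1 : δ < 1) (ha : -1 < a) (hnN : (n : ℝ) = c * N)
    (hn : 2 * (|a| + 1) ≤ δ * n) (hlt : n < N) {k : ℕ} (hk : k ≤ n)
    (hkc : 2 * δ * n < |(k : ℝ) - c * n|) :
    bbWeight (n + a) (N - n) n k ≤ (1 - δ / 6) ^ ⌊δ * n⌋₊ *
      ∑ j ∈ Finset.range (n + 1), bbWeight (n + a) (N - n) n j := by
  have hlt1 : (n : ℝ) + 1 ≤ N := by exact_mod_cast hlt
  have hn0 : (0 : ℝ) ≤ n := by positivity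
  have habs : 0 ≤ |a| := abs_nonneg a
  have hn' : |a| ≤ n := by nlinarith
  have hnpos : (0 : ℝ) < n := by nlinarith
  have hn1 : (1 : ℝ) ≤ n := by exact_mod_cast (by exact_mod_cast hnpos : 0 < n)
  have hw := bbWeight_nonneg (A := n + a) (B := N - n) (by linarith) (by linarith) n
  have hq : 0 ≤ 1 - δ / 6 := by linarith
  have hle : ∀ j ≤ n, bbWeight (n + a) (N - n) n j ≤
      ∑ j ∈ Finset.range (n + 1), bbWeight (n + a) (N - n) n j := fun j hj =>
    Finset.single_le_sum (f := fun j => bbWeight (n + a) (N - n) n j) (fun i _ => hw i)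
      (Finset.mem_range.mpr (by omega))
  have hL : (⌊δ * n⌋₊ : ℝ) ≤ δ * n := Nat.floor_le (by positivity)
  rcases lt_abs.mp hkc with h | h
  · have hLk : (⌊δ * n⌋₊ : ℝ) ≤ k := by
      have : 0 ≤ c := by
        by_contra hneg
        have : c * (N : ℝ) ≤ 0 := by nlinarith
        linarith
      nlinarith
    have key : ∀ i : ℕ, i ≤ ⌊δ * n⌋₊ → bbWeight (n + a) (N - n) n k ≤
        (1 - δ / 6) ^ i * bbWeight (n + a) (N - n) n (k - i) := by
      intro i
      induction i with
      | zero => simp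
      | succ i ih =>
        intro hi
        have hik : i + 1 ≤ k := hi.trans (by exact_mod_cast hLk)
        have hi' : ((i : ℝ) + 1) ≤ δ * n := le_trans (by exact_mod_cast hi) hL
        refine (ih (by omega)).trans ?_
        have hst := bbWeight_succ_le hδ ha hnN hn hlt (k := k - (i + 1)) (by omega)
          (by push_cast [Nat.cast_sub hik]; linarith)
        rw [show k - (i + 1) + 1 = k - i by omega] at hst
        rw [pow_succ, mul_assoc]
        exact mul_le_mul_of_nonneg_left hst (by positivity)
    exact (key _ le_rfl).trans (mul_le_mul_of_nonneg_left (hle _ (by omega)) (by positivity))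
  · have hcn : (c - δ) * n < n := by nlinarith
    have key : ∀ i : ℕ, i ≤ ⌊δ * n⌋₊ → bbWeight (n + a) (N - n) n k ≤
        (1 - δ / 6) ^ i * bbWeight (n + a) (N - n) n (k + i) := by
      intro i
      induction i with
      | zero => simp
      | succ i ih =>
        intro hi
        have hi' : ((i : ℝ) + 1) ≤ δ * n := le_trans (by exact_mod_cast hi) hL
        refine (ih (by omega)).trans ?_
        have hki : ((k + i : ℕ) : ℝ) ≤ (c - δ) * n := by push_cast; linarith
        have hst := bbWeight_le_succ hc1 hδ ha hnN hn hn' hlt (k := k + i)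
          (by exact_mod_cast hki.trans_lt hcn) hki
        rw [pow_succ, mul_assoc]
        exact mul_le_mul_of_nonneg_left hst (by positivity)
    refine (key _ le_rfl).trans (mul_le_mul_of_nonneg_left (hle _ ?_) (by positivity))
    have : ((k + ⌊δ * n⌋₊ : ℕ) : ℝ) ≤ n := by push_cast; linarith
    exact_mod_cast this

end Tail

/-! ### Averages of regularly varying functions -/

lemma tendsto_poly_mul_pow_floor {q δ : ℝ} (hq0 : 0 < q) (hq1 : q < 1) (hδ : 0 < δ) (p : ℕ) :
    Tendsto (fun n : ℕ => ((n : ℝ) + 1) * (n : ℝ) ^ p * q ^ ⌊δ * n⌋₊) atTop (nhds 0) := by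
  have hr : |q ^ δ| < 1 := by
    rw [abs_of_pos (Real.rpow_pos_of_pos hq0 δ)]
    exact Real.rpow_lt_one hq0.le hq1 hδ
  have h := (tendsto_pow_const_mul_const_pow_of_abs_lt_one (p + 1) hr).const_mul (2 * q⁻¹)
  rw [mul_zero] at h
  refine squeeze_zero' (Eventually.of_forall fun n => by positivity) ?_ h
  filter_upwards [eventually_ge_atTop 1] with n hn
  have hn1 : (1 : ℝ) ≤ n := by exact_mod_cast hn
  have h1 : q ^ ⌊δ * n⌋₊ ≤ q⁻¹ * (q ^ δ) ^ n := by
    rw [← Real.rpow_natCast, ← Real.rpow_natCast, ← Real.rpow_mul hq0.le, ← Real.rpow_neg_one,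
      ← Real.rpow_add hq0]
    refine Real.rpow_le_rpow_of_exponent_ge hq0 hq1.le ?_
    linarith [Nat.lt_floor_add_one (δ * n)]
  calc ((n : ℝ) + 1) * (n : ℝ) ^ p * q ^ ⌊δ * n⌋₊
      ≤ (2 * n) * (n : ℝ) ^ p * (q⁻¹ * (q ^ δ) ^ n) := by
        gcongr
        linarith
    _ = _ := by ring

/-- Averaging a function `h k ∼ C k^{-s}` against the beta-binomial weights gives `C (c n)^{-s}`
asymptotically: near `k = c n` this is continuity of `(u, v) ↦ u v^{-s}`, and elsewhere the
polynomial bounds on `h` are beaten by the exponentially small weights. -/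
lemma bbWeight_average {a c : ℝ} (hc0 : 0 < c) (hc1 : c < 1) (ha : -1 < a) {h : ℕ → ℝ} {s C : ℝ}
    (hh : Tendsto (fun k : ℕ => h k * (k : ℝ) ^ s) atTop (nhds C)) {ε : ℝ} (hε : 0 < ε) :
    ∃ n₀ : ℕ, ∀ n N : ℕ, n₀ ≤ n → (n : ℝ) = c * N →
      |(∑ k ∈ Finset.range (n + 1), bbWeight (n + a) (N - n) n k * h k) * (c * n) ^ s -
        C * ∑ k ∈ Finset.range (n + 1), bbWeight (n + a) (N - n) n k| ≤
      ε * ∑ k ∈ Finset.range (n + 1), bbWeight (n + a) (N - n) n k := by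
  obtain ⟨D, hD⟩ := (Metric.isBounded_range_of_tendsto _ hh).exists_norm_le
  replace hD : ∀ k : ℕ, |h k * (k : ℝ) ^ s| ≤ D := fun k => hD _ ⟨k, rfl⟩
  have hD0 : 0 ≤ D := (abs_nonneg _).trans (hD 0)
  obtain ⟨p, hp⟩ := exists_nat_ge |s|
  have hpow : ∀ (t : ℝ), |t| ≤ |s| → ∀ k n : ℕ, 1 ≤ k → k ≤ n → (k : ℝ) ^ t ≤ (n : ℝ) ^ p := by
    intro t ht k n hk hkn
    have hk1 : (1 : ℝ) ≤ k := by exact_mod_cast hk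
    calc (k : ℝ) ^ t ≤ (k : ℝ) ^ (p : ℝ) :=
          Real.rpow_le_rpow_of_exponent_le hk1 ((le_abs_self t).trans (ht.trans hp))
      _ = (k : ℝ) ^ p := Real.rpow_natCast _ _
      _ ≤ (n : ℝ) ^ p := by gcongr
  have hcs : 0 < c ^ s := Real.rpow_pos_of_pos hc0 s
  -- A crude polynomial bound, used away from `k = c n`.
  have hcrude : ∀ k n : ℕ, 1 ≤ n → k ≤ n →
      |h k * (c * n) ^ s - C| ≤ ((D + |h 0|) * c ^ s + |C|) * (n : ℝ) ^ (2 * p) := by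
    intro k n hn hkn
    have hn1 : (1 : ℝ) ≤ n := by exact_mod_cast hn
    have hnp : (1 : ℝ) ≤ (n : ℝ) ^ p := one_le_pow₀ hn1
    have h1 : |h k| ≤ (D + |h 0|) * (n : ℝ) ^ p := by
      -- At `k = 0` the factor `k^s` carries no information about `h 0`, hence the term `|h 0|`.
      rcases Nat.eq_zero_or_pos k with rfl | hk
      · nlinarith [abs_nonneg (h 0)]
      · have hk0 : (0 : ℝ) < k := by exact_mod_cast hk
        have e : h k = h k * (k : ℝ) ^ s * (k : ℝ) ^ (-s) := by
          rw [mul_assoc, ← Real.rpow_add hk0]; simp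
        rw [e, abs_mul, abs_of_pos (Real.rpow_pos_of_pos hk0 (-s))]
        exact mul_le_mul ((hD k).trans (by linarith [abs_nonneg (h 0)]))
          (hpow _ (by simp) k n hk hkn) (by positivity) (by positivity)
    have h2 : (c * (n : ℝ)) ^ s ≤ c ^ s * (n : ℝ) ^ p := by
      rw [Real.mul_rpow hc0.le (by positivity)]
      exact mul_le_mul_of_nonneg_left (hpow s le_rfl n n hn le_rfl) hcs.le
    calc |h k * (c * n) ^ s - C| ≤ |h k * (c * n) ^ s| + |C| := abs_sub _ _
      _ = |h k| * (c * n) ^ s + |C| := by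
        rw [abs_mul, abs_of_nonneg (a := (c * (n : ℝ)) ^ s) (by positivity)]
      _ ≤ ((D + |h 0|) * (n : ℝ) ^ p) * (c ^ s * (n : ℝ) ^ p) + |C| * ((n : ℝ) ^ p * (n : ℝ) ^ p) := by
        gcongr
        exact le_mul_of_one_le_right (abs_nonneg C) (one_le_mul_of_one_le_of_one_le hnp hnp)
      _ = _ := by rw [two_mul, pow_add]; ring
  -- Near `k = c n` the rescaled function is close to `C`.
  have hcont : ContinuousAt (fun z : ℝ × ℝ => z.1 * z.2 ^ (-s)) (C, 1) := by
    refine ContinuousAt.mul continuousAt_fst ?_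
    exact ContinuousAt.rpow_const continuousAt_snd (Or.inl (by simp))
  obtain ⟨η, hη, hη'⟩ := Metric.continuousAt_iff.mp hcont (ε / 2) (by linarith)
  obtain ⟨k₀, hk₀⟩ := Metric.tendsto_atTop.mp hh η hη
  obtain ⟨δ, hδ, hδ1, hδc, hδη⟩ : ∃ δ : ℝ, 0 < δ ∧ δ < 1 ∧ 4 * δ ≤ c ∧ 4 * δ ≤ c * η := by
    refine ⟨min (c / 4) (c * η / 4), by positivity, ?_, ?_, ?_⟩
    · linarith [min_le_left (c / 4) (c * η / 4)]
    · linarith [min_le_left (c / 4) (c * η / 4)]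
    · linarith [min_le_right (c / 4) (c * η / 4)]
  have hdecay := (tendsto_poly_mul_pow_floor (q := 1 - δ / 6) (by linarith) (by linarith) hδ
    (2 * p)).const_mul ((D + |h 0|) * c ^ s + |C|)
  rw [mul_zero] at hdecay
  obtain ⟨n₁, hn₁⟩ := eventually_atTop.mp
    (hdecay.eventually (gt_mem_nhds (by linarith : (0 : ℝ) < ε / 2)))
  obtain ⟨n₂, hn₂⟩ := exists_nat_ge (2 * (|a| + 1) / δ)
  obtain ⟨n₃, hn₃⟩ := exists_nat_ge (2 * (k₀ : ℝ) / c)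
  refine ⟨max (max n₁ n₂) (max n₃ 1), fun n N hn hnN => ?_⟩
  have hn1 : 1 ≤ n := (le_max_right _ _).trans ((le_max_right _ _).trans hn)
  have hn1' : (1 : ℝ) ≤ n := by exact_mod_cast hn1
  have hb1 := hn₁ n ((le_max_left _ _).trans ((le_max_left _ _).trans hn))
  have hb2 : (n₂ : ℝ) ≤ n := by
    exact_mod_cast (le_max_right _ _).trans ((le_max_left _ _).trans hn)
  have hb3 : (n₃ : ℝ) ≤ n := by
    exact_mod_cast (le_max_left _ _).trans ((le_max_right _ _).trans hn)
  have hN0 : (0 : ℝ) < N := by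
    by_contra hneg
    nlinarith
  have hlt : n < N := by
    have : (n : ℝ) < N := by nlinarith
    exact_mod_cast this
  have hlt' : (n : ℝ) < N := by exact_mod_cast hlt
  have hna : 2 * (|a| + 1) ≤ δ * n := by
    have := hn₂.trans hb2
    rw [div_le_iff₀ hδ] at this
    linarith
  have hk0n : 2 * (k₀ : ℝ) ≤ c * n := by
    have := hn₃.trans hb3
    rw [div_le_iff₀ hc0] at this
    linarith
  have hw := bbWeight_nonneg (A := n + a) (B := N - n) (by linarith) (by linarith) n
  set W := ∑ k ∈ Finset.range (n + 1), bbWeight (n + a) (N - n) n k with hW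
  have hW0 : 0 ≤ W := Finset.sum_nonneg fun k _ => hw k
  set M := (1 - δ / 6) ^ ⌊δ * n⌋₊ * W * (((D + |h 0|) * c ^ s + |C|) * (n : ℝ) ^ (2 * p)) with hM
  have hq : (0 : ℝ) ≤ 1 - δ / 6 := by linarith
  have hM0 : 0 ≤ M := by positivity
  have hterm : ∀ k ∈ Finset.range (n + 1),
      bbWeight (n + a) (N - n) n k * |h k * (c * n) ^ s - C| ≤
        ε / 2 * bbWeight (n + a) (N - n) n k + M := by
    intro k hk
    have hkn : k ≤ n := by simpa [Nat.lt_succ_iff] using hk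
    rcases lt_or_ge (2 * δ * n) |(k : ℝ) - c * n| with hfar | hnear
    · have h1 := bbWeight_tail hc1 hδ hδ1 ha hnN hna hlt hkn hfar
      have h2 := mul_le_mul h1 (hcrude k n hn1 hkn) (abs_nonneg _) (by positivity)
      have h3 : 0 ≤ ε / 2 * bbWeight (n + a) (N - n) n k := mul_nonneg (by linarith) (hw k)
      linarith
    · have hcn : 0 < c * (n : ℝ) := by positivity
      obtain ⟨hl, hu⟩ := abs_le.mp hnear
      have hδcn : 4 * δ * n ≤ c * n := mul_le_mul_of_nonneg_right hδc (by linarith)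
      have hδηn : 4 * δ * n ≤ c * η * n := mul_le_mul_of_nonneg_right hδη (by linarith)
      have hδn : 0 < δ * n := by positivity
      have hkk : (k₀ : ℝ) ≤ k := by linarith
      have hkpos : (0 : ℝ) < k := by linarith
      have h1 := hk₀ k (by exact_mod_cast hkk)
      have h2 : |(k : ℝ) / (c * n) - 1| < η := by
        rw [show (k : ℝ) / (c * n) - 1 = (k - c * n) / (c * n) by field_simp, abs_div,
          abs_of_pos hcn, div_lt_iff₀ hcn]
        linarith
      have h3 := hη' (x := (h k * (k : ℝ) ^ s, (k : ℝ) / (c * n)))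
        (by rw [Prod.dist_eq]; exact max_lt h1 (by rw [Real.dist_eq]; exact h2))
      have h4 : h k * (k : ℝ) ^ s * ((k : ℝ) / (c * n)) ^ (-s) = h k * (c * n) ^ s := by
        rw [Real.rpow_neg (by positivity), Real.div_rpow hkpos.le hcn.le]
        have := (Real.rpow_pos_of_pos hkpos s).ne'
        field_simp
      simp only [Real.dist_eq, h4, Real.one_rpow, mul_one] at h3
      have h5 := mul_le_mul_of_nonneg_left h3.le (hw k)
      linarith
  calc |(∑ k ∈ Finset.range (n + 1), bbWeight (n + a) (N - n) n k * h k) * (c * n) ^ s - C * W|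
      = |∑ k ∈ Finset.range (n + 1), bbWeight (n + a) (N - n) n k * (h k * (c * n) ^ s - C)| := by
        congr 1
        rw [hW, Finset.sum_mul, Finset.mul_sum, ← Finset.sum_sub_distrib]
        exact Finset.sum_congr rfl fun k _ => by ring
    _ ≤ ∑ k ∈ Finset.range (n + 1), bbWeight (n + a) (N - n) n k * |h k * (c * n) ^ s - C| := by
        refine (Finset.abs_sum_le_sum_abs _ _).trans_eq (Finset.sum_congr rfl fun k _ => ?_)
        rw [abs_mul, abs_of_nonneg (hw k)]
    _ ≤ ∑ k ∈ Finset.range (n + 1), (ε / 2 * bbWeight (n + a) (N - n) n k + M) :=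
        Finset.sum_le_sum hterm
    _ = ε / 2 * W + ((D + |h 0|) * c ^ s + |C|) *
          (((n : ℝ) + 1) * (n : ℝ) ^ (2 * p) * (1 - δ / 6) ^ ⌊δ * n⌋₊) * W := by
        rw [Finset.sum_add_distrib, ← Finset.mul_sum, Finset.sum_const, Finset.card_range,
          nsmul_eq_mul, hM]
        push_cast
        ring
    _ ≤ ε / 2 * W + ε / 2 * W := by gcongr
    _ = ε * W := by ring

/-! ### Pochhammer asymptotics and the limit along `n = c N` -/

/-- Euler's limit formula, in the form `(s)_m ∼ m^{s-1} m! / Γ(s)`. -/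
lemma tendsto_pochR_div (s : ℝ) (hs : Real.Gamma s ≠ 0) :
    Tendsto (fun m : ℕ => pochR s m / ((m : ℝ) ^ (s - 1) * m.factorial)) atTop
      (nhds (Real.Gamma s)⁻¹) := by
  have h1 := (Real.GammaSeq_tendsto_Gamma s).inv₀ hs
  have h2 := tendsto_natCast_div_add_atTop s
  have h3 := h1.mul h2
  rw [mul_one] at h3
  refine h3.congr' ?_
  filter_upwards [eventually_ge_atTop 1, tendsto_natCast_atTop_atTop.eventually_gt_atTop (-s)]
    with m hm hm'
  have hm0 : (0 : ℝ) < m := by exact_mod_cast hm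
  have hne : s + m ≠ 0 := by linarith
  have hne' : (m : ℝ) + s ≠ 0 := by linarith
  have e : (m : ℝ) ^ s = (m : ℝ) ^ (s - 1) * m := by
    rw [← Real.rpow_add_one hm0.ne', sub_add_cancel]
  have hp : 0 < (m : ℝ) ^ (s - 1) := Real.rpow_pos_of_pos hm0 _
  rw [Real.GammaSeq, ← pochR, pochR_succ, e, inv_div, add_comm (m : ℝ) s]
  field_simp

/-- The test function `(x)_k / (y)_k` is asymptotic to a multiple of `k^{x-y}`. -/
lemma tendsto_pochR_div_pochR (x y : ℝ) (hx : Real.Gamma x ≠ 0) (hy : Real.Gamma y ≠ 0) :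
    Tendsto (fun k : ℕ => pochR x k / pochR y k * (k : ℝ) ^ (y - x)) atTop
      (nhds (Real.Gamma y / Real.Gamma x)) := by
  have h := (tendsto_pochR_div x hx).div (tendsto_pochR_div y hy) (inv_ne_zero hy)
  rw [inv_div_inv] at h
  refine h.congr' ?_
  filter_upwards [eventually_ge_atTop 1] with k hk
  have hk0 : (0 : ℝ) < k := by exact_mod_cast hk
  have e : (k : ℝ) ^ (y - 1) = (k : ℝ) ^ (x - 1) * (k : ℝ) ^ (y - x) := by
    rw [← Real.rpow_add hk0]; congr 1; ring
  have hp : 0 < (k : ℝ) ^ (x - 1) := Real.rpow_pos_of_pos hk0 _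
  have hp : 0 < (k : ℝ) ^ (y - x) := Real.rpow_pos_of_pos hk0 _
  simp only [Pi.div_apply, e]
  field_simp

/-- Stirling's formula for `(a+1)_m`, with an unspecified constant. -/
lemma exists_tendsto_pochR_stirling (a : ℝ) (ha : -1 < a) :
    ∃ L : ℝ, L ≠ 0 ∧ Tendsto (fun m : ℕ => pochR (a + 1) m /
      ((m : ℝ) ^ ((m : ℝ) + a + 1 / 2) * Real.exp (-m))) atTop (nhds L) := by
  have hG : Real.Gamma (a + 1) ≠ 0 := (Real.Gamma_pos_of_pos (by linarith)).ne'
  have h := ((tendsto_pochR_div (a + 1) hG).mul Stirling.tendsto_stirlingSeq_sqrt_pi).mul_const √2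
  refine ⟨_, ?_, h.congr' ?_⟩
  · have : √π ≠ 0 := by positivity
    have : √(2 : ℝ) ≠ 0 := by positivity
    positivity
  filter_upwards [eventually_ge_atTop 1] with m hm
  have hm0 : (0 : ℝ) < m := by exact_mod_cast hm
  have e : (m : ℝ) ^ ((m : ℝ) + a + 1 / 2) = (m : ℝ) ^ m * (m : ℝ) ^ a * √(m : ℝ) := by
    rw [Real.rpow_add hm0, Real.rpow_add hm0, Real.rpow_natCast, Real.sqrt_eq_rpow]
  have e2 : Real.exp (-(m : ℝ)) = (Real.exp 1 ^ m)⁻¹ := by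
    rw [Real.exp_neg, ← Real.exp_nat_mul, mul_one]
  have hp : 0 < (m : ℝ) ^ a := Real.rpow_pos_of_pos hm0 _
  rw [Stirling.stirlingSeq, e, e2, Real.sqrt_mul (by norm_num), div_pow, add_sub_cancel_right]
  field_simp

lemma pochR_add (y : ℝ) (m k : ℕ) : pochR y (m + k) = pochR y m * pochR (y + m) k := by
  induction k with
  | zero => simp [pochR_zero]
  | succ k ih =>
    rw [← add_assoc, pochR_succ, pochR_succ, ih]
    push_cast
    ring

lemma pochR_succ' (y : ℝ) (k : ℕ) : pochR y (k + 1) = y * pochR (y + 1) k := by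
  have := pochR_add y 1 k
  rw [add_comm k 1, this, pochR_succ, pochR_zero]
  simp

/-- The filter on pairs `(n, N)` describing `n → ∞` along `n = c N`. -/
def rayFilter (c : ℝ) : Filter (ℕ × ℕ) :=
  comap Prod.fst atTop ⊓ 𝓟 {p : ℕ × ℕ | (p.1 : ℝ) = c * p.2}

lemma eventually_rayFilter {c : ℝ} {P : ℕ × ℕ → Prop} :
    (∀ᶠ p in rayFilter c, P p) ↔
      ∃ n₀ : ℕ, ∀ n N : ℕ, n₀ ≤ n → (n : ℝ) = c * N → P (n, N) := by
  rw [rayFilter, eventually_inf_principal, eventually_comap, eventually_atTop]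
  constructor
  · rintro ⟨n₀, h⟩
    exact ⟨n₀, fun n N hn hN => h n hn (n, N) rfl hN⟩
  · rintro ⟨n₀, h⟩
    exact ⟨n₀, fun n hn p hp hpc => h p.1 p.2 (hp ▸ hn) hpc⟩

lemma tendsto_fst_rayFilter (c : ℝ) : Tendsto Prod.fst (rayFilter c) atTop :=
  tendsto_comap.mono_left inf_le_left

lemma eventually_rayFilter_basic {c : ℝ} (hc0 : 0 < c) (hc1 : c < 1) :
    ∀ᶠ p in rayFilter c, (p.1 : ℝ) = c * p.2 ∧ 1 ≤ p.1 ∧ p.1 < p.2 := by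
  refine eventually_rayFilter.mpr ⟨1, fun n N hn hN => ⟨hN, hn, ?_⟩⟩
  have hn1 : (1 : ℝ) ≤ n := by exact_mod_cast hn
  have hN0 : (0 : ℝ) < N := by
    by_contra hneg
    nlinarith
  have : (n : ℝ) < N := by nlinarith
  exact_mod_cast this

lemma tendsto_snd_rayFilter {c : ℝ} (hc0 : 0 < c) (hc1 : c < 1) :
    Tendsto Prod.snd (rayFilter c) atTop :=
  tendsto_atTop_mono' _ ((eventually_rayFilter_basic hc0 hc1).mono fun _ h => h.2.2.le)
    (tendsto_fst_rayFilter c)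

/-- Asymptotics of the total weight: `(N+a)_n ∼ N^n (1+c)^{N+n+a-1/2} e^{-n}`. -/
lemma tendsto_total_weight {a c : ℝ} (hc0 : 0 < c) (hc1 : c < 1) (ha : -1 < a) :
    Tendsto (fun p : ℕ × ℕ => pochR ((p.2 : ℝ) + a) p.1 /
      ((p.2 : ℝ) ^ (p.1 : ℝ) * (1 + c) ^ ((p.1 : ℝ) + p.2 + a - 1 / 2) * Real.exp (-p.1)))
      (rayFilter c) (nhds 1) := by
  obtain ⟨L, hL, hG⟩ := exists_tendsto_pochR_stirling a ha
  have hsnd := tendsto_snd_rayFilter hc0 hc1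
  have h1 := hG.comp hsnd
  -- Compare Stirling at `N + n` and at `N`: the unknown constant `L` cancels.
  have h2 := hG.comp ((tendsto_fst_rayFilter c).atTop_add_atTop hsnd)
  have h3 := h2.div h1 hL
  rw [div_self hL] at h3
  have h4 : Tendsto (fun p : ℕ × ℕ => a / (p.2 : ℝ)) (rayFilter c) (nhds 0) :=
    (tendsto_const_div_atTop_nhds_zero_nat a).comp hsnd
  have h5 : Tendsto (fun p : ℕ × ℕ => (1 + c) * ((1 + a / (p.2 : ℝ)) / (1 + c + a / (p.2 : ℝ))))
      (rayFilter c) (nhds 1) := by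
    have hne : 1 + c ≠ 0 := by linarith
    have := ((h4.const_add 1).div (h4.const_add (1 + c)) (by simpa using hne)).const_mul (1 + c)
    simpa [mul_inv_cancel₀ hne] using this
  have h6 := h3.mul h5
  rw [mul_one] at h6
  refine h6.congr' ?_
  filter_upwards [eventually_rayFilter_basic hc0 hc1] with p hp
  obtain ⟨n, N⟩ := p
  obtain ⟨hnN, hn1, hlt⟩ := hp
  simp only at hnN hn1 hlt
  have hn1' : (1 : ℝ) ≤ n := by exact_mod_cast hn1
  have hN0 : (0 : ℝ) < N := by
    have : (n : ℝ) < N := by exact_mod_cast hlt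
    linarith
  have hN1 : (1 : ℝ) ≤ N := by exact_mod_cast (by omega : 1 ≤ N)
  simp only [Function.comp, Pi.div_apply, Nat.cast_add]
  have hc' : 0 < 1 + c := by linarith
  have hsum : (n : ℝ) + N = N * (1 + c) := by rw [hnN]; ring
  have e1 : ((n : ℝ) + N) ^ ((n : ℝ) + N + a + 1 / 2) =
      (N : ℝ) ^ ((N : ℝ) + a + 1 / 2) * (N : ℝ) ^ (n : ℝ) *
        ((1 + c) ^ ((n : ℝ) + N + a - 1 / 2) * (1 + c)) := by
    rw [← Real.rpow_add hN0, ← Real.rpow_add_one hc'.ne']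
    conv_lhs => rw [show ((n : ℝ) + N) ^ ((n : ℝ) + N + a + 1 / 2) =
      (N * (1 + c)) ^ ((n : ℝ) + N + a + 1 / 2) by rw [hsum]]
    rw [Real.mul_rpow hN0.le hc'.le]
    congr 2 <;> ring
  have e2 : Real.exp (-((n : ℝ) + N)) = Real.exp (-n) * Real.exp (-N) := by
    rw [← Real.exp_add]; congr 1; ring
  -- Both sides are `(a+1)_N` times `(N+a)_{n+1}`.
  have e3 : pochR (a + 1) (n + N) * (N + a) =
      pochR (a + 1) N * (pochR ((N : ℝ) + a) n * ((N : ℝ) * (1 + c) + a)) := by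
    have f1 := pochR_succ ((N : ℝ) + a) n
    rw [pochR_succ'] at f1
    rw [add_comm n N, pochR_add, ← hsum, show a + 1 + (N : ℝ) = N + a + 1 by ring]
    linear_combination pochR (a + 1) N * f1
  have p1 : 0 < (N : ℝ) ^ ((N : ℝ) + a + 1 / 2) := Real.rpow_pos_of_pos hN0 _
  have p2 : 0 < (N : ℝ) ^ (n : ℝ) := Real.rpow_pos_of_pos hN0 _
  have p3 : 0 < (1 + c) ^ ((n : ℝ) + N + a - 1 / 2) := Real.rpow_pos_of_pos hc' _
  have p4 : 0 < (N : ℝ) + a := by linarith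
  have p5 : 0 < (N : ℝ) * (1 + c) + a := by nlinarith
  have p6 := pochR_pos (y := a + 1) (by linarith) N
  have e4 : pochR (a + 1) (n + N) =
      pochR (a + 1) N * (pochR ((N : ℝ) + a) n * ((N : ℝ) * (1 + c) + a)) / (N + a) := by
    rw [eq_div_iff p4.ne', e3]
  have e5 : (1 + a / (N : ℝ)) / (1 + c + a / (N : ℝ)) = (N + a) / (N * (1 + c) + a) := by
    have : 1 + c + a / (N : ℝ) = (N * (1 + c) + a) / N := by field_simp
    rw [this]
    field_simp
  rw [e1, e2, e4, e5]
  field_simp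

lemma Gamma_div_Gamma_neg (α x : ℝ) (hx : Real.Gamma (-x) ≠ 0) (hs : Real.sin (π * x) ≠ 0) :
    Real.Gamma (α + 1) / Real.Gamma (-x) =
      -(Real.Gamma (α + 1) * Real.Gamma (x + 1) * Real.sin (π * x) / π) := by
  have h := Real.Gamma_mul_Gamma_one_sub (-x)
  rw [mul_neg, Real.sin_neg, show 1 - -x = x + 1 by ring] at h
  have hπ := Real.pi_ne_zero
  rw [eq_div_iff (neg_ne_zero.mpr hs)] at h
  rw [div_eq_iff hx, ← neg_div, div_mul_eq_mul_div, eq_div_iff hπ]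
  linear_combination (-Real.Gamma (α + 1)) * h

/-! ### Asymptotics of the Hahn polynomial -/

/-- for fixed `α, β > −1`, rational `c ∈ (0,1)`, and fixed real
`x > −1/2` which is not a nonnegative integer, as `n → ∞` with `N = n/c ∈ ℕ`,
`Q_n(x;α,β,N−1) ~ −(Γ(α+1)Γ(N−n)/(π Γ(N) e^n n^{2x+2α+2})) (1+c)^{n+N+α+β+1/2}
N^{x+n+α+1} Γ(x+1) sin(πx)`, in the sense that the ratio tends to `1`. -/
theorem hahn_fixed_x_asymptotics_right
    (α β : ℝ) (hα : -1 < α) (hβ : -1 < β)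
    (c : ℚ) (hc0 : 0 < c) (hc1 : c < 1)
    (x : ℝ) (hx : -(1/2 : ℝ) < x) (hxint : ∀ m : ℕ, x ≠ (m : ℝ))
    (R : ℕ → ℕ → ℝ)
    (hR : ∀ n N : ℕ, R n N =
      -(Real.Gamma (α + 1) * Real.Gamma ((N:ℝ) - (n:ℝ)) /
          (π * Real.Gamma (N:ℝ) * Real.exp (n:ℝ) * (n:ℝ) ^ (2*x + 2*α + 2))) *
        (1 + (c:ℝ)) ^ ((n:ℝ) + (N:ℝ) + α + β + 1/2) *
        (N:ℝ) ^ (x + (n:ℝ) + α + 1) *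
        Real.Gamma (x + 1) * Real.sin (π * x)) :
    ∀ ε : ℝ, 0 < ε → ∃ n₀ : ℕ, ∀ n N : ℕ, n₀ ≤ n → (n : ℚ) = c * (N : ℚ) →
      |hahnQR n α β (N - 1) x / R n N - 1| < ε := by
  have hc0' : (0 : ℝ) < c := by exact_mod_cast hc0
  have hc1' : (c : ℝ) < 1 := by exact_mod_cast hc1
  have hc' : (0 : ℝ) < 1 + c := by linarith
  have hGx : Real.Gamma (-x) ≠ 0 := Real.Gamma_ne_zero fun m h => hxint m (by linarith)
  have hGα : 0 < Real.Gamma (α + 1) := Real.Gamma_pos_of_pos (by linarith)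
  have hGx1 : 0 < Real.Gamma (x + 1) := Real.Gamma_pos_of_pos (by linarith)
  have hsin : Real.sin (π * x) ≠ 0 := by
    intro h
    obtain ⟨m, hm⟩ := Real.sin_eq_zero_iff.mp h
    have hmx : (m : ℝ) = x := by
      have := Real.pi_ne_zero
      rw [mul_comm] at hm
      exact mul_left_cancel₀ this hm
    have hm0 : 0 ≤ m := by
      have : (-1 : ℝ) < m := by linarith
      have : (-1 : ℤ) < m := by exact_mod_cast this
      omega
    obtain ⟨k, rfl⟩ := Int.eq_ofNat_of_zero_le hm0
    exact hxint k (by rw [← hmx]; simp)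
  have ha : -1 < α + β + 1 := by linarith
  set a := α + β + 1 with ha_def
  set C := Real.Gamma (α + 1) / Real.Gamma (-x) with hC
  have hC0 : C ≠ 0 := div_ne_zero hGα.ne' hGx
  have hCeq := Gamma_div_Gamma_neg α x hGx hsin
  have hh := tendsto_pochR_div_pochR (-x) (α + 1) hGx hGα.ne'
  rw [← hC, show α + 1 - -x = x + α + 1 by ring] at hh
  -- The beta-binomial mean of `(-x)_k / (α+1)_k`, rescaled, tends to `C = Γ(α+1)/Γ(-x)`.
  have havg : Tendsto (fun p : ℕ × ℕ =>
      (∑ k ∈ Finset.range (p.1 + 1), bbWeight (p.1 + a) (p.2 - p.1) p.1 k *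
        (pochR (-x) k / pochR (α + 1) k)) * ((c : ℝ) * p.1) ^ (x + α + 1) /
        ∑ k ∈ Finset.range (p.1 + 1), bbWeight (p.1 + a) (p.2 - p.1) p.1 k)
      (rayFilter c) (nhds C) := by
    rw [Metric.tendsto_nhds]
    intro ε hε
    have h : ∀ᶠ p : ℕ × ℕ in rayFilter c,
        |(∑ k ∈ Finset.range (p.1 + 1), bbWeight (p.1 + a) (p.2 - p.1) p.1 k *
          (pochR (-x) k / pochR (α + 1) k)) * ((c : ℝ) * p.1) ^ (x + α + 1) -
            C * ∑ k ∈ Finset.range (p.1 + 1), bbWeight (p.1 + a) (p.2 - p.1) p.1 k| ≤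
          ε / 2 * ∑ k ∈ Finset.range (p.1 + 1), bbWeight (p.1 + a) (p.2 - p.1) p.1 k :=
      eventually_rayFilter.mpr (bbWeight_average hc0' hc1' ha hh (half_pos hε))
    filter_upwards [h, eventually_rayFilter_basic hc0' hc1'] with p hp hb
    obtain ⟨-, hn, hlt⟩ := hb
    have hlt' : (p.1 : ℝ) < p.2 := by exact_mod_cast hlt
    have hn' : (1 : ℝ) ≤ p.1 := by exact_mod_cast hn
    have hW : 0 < ∑ k ∈ Finset.range (p.1 + 1), bbWeight (p.1 + a) (p.2 - p.1) p.1 k := by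
      rw [sum_bbWeight]
      exact div_pos (pochR_pos (by linarith) _) (by positivity)
    rw [Real.dist_eq, div_sub' hW.ne', abs_div, abs_of_pos hW, div_lt_iff₀ hW, mul_comm _ C]
    nlinarith
  have hmain := (havg.div_const C).mul (tendsto_total_weight hc0' hc1' ha)
  rw [div_self hC0, mul_one] at hmain
  have hQR : Tendsto (fun p : ℕ × ℕ => hahnQR p.1 α β (p.2 - 1) x / R p.1 p.2)
      (rayFilter c) (nhds 1) := by
    refine hmain.congr' ?_
    filter_upwards [eventually_rayFilter_basic hc0' hc1'] with p hp
    obtain ⟨n, N⟩ := p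
    obtain ⟨hnN, hn1, hlt⟩ := hp
    simp only at hnN hn1 hlt ⊢
    have hlt' : (n : ℝ) < N := by exact_mod_cast hlt
    have hn1' : (1 : ℝ) ≤ n := by exact_mod_cast hn1
    have hn0 : (0 : ℝ) < n := by linarith
    have hN0 : (0 : ℝ) < N := by linarith
    rw [hahnQR_eq_sum n N hlt, sum_bbWeight, hR, hC, hCeq,
      show (n : ℝ) + α + β + 1 = n + a by rw [ha_def]; ring,
      show (n : ℝ) + a + (N - n) = N + a by ring,
      show (n : ℝ) + N + α + β + 1 / 2 = n + N + a - 1 / 2 by rw [ha_def]; ring]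
    set S := ∑ k ∈ Finset.range (n + 1), bbWeight (n + a) (N - n) n k *
      (pochR (-x) k / pochR (α + 1) k)
    have g1 : Real.Gamma (N : ℝ) = (N - 1).factorial := by
      obtain ⟨m, rfl⟩ : ∃ m, N = m + 1 := ⟨N - 1, by omega⟩
      rw [Nat.add_sub_cancel, ← Real.Gamma_nat_eq_factorial]; push_cast; rfl
    have g2 : Real.Gamma ((N : ℝ) - n) = (N - n - 1).factorial := by
      obtain ⟨m, rfl⟩ : ∃ m, N = n + m + 1 := ⟨N - n - 1, by omega⟩
      rw [show n + m + 1 - n - 1 = m by omega, ← Real.Gamma_nat_eq_factorial]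
      congr 1; push_cast; ring
    -- `c n = n² / N` turns `(c n)^{x+α+1}` into the powers of `n` and `N` in the statement.
    have e1 : ((c : ℝ) * n) ^ (x + α + 1) =
        (n : ℝ) ^ (2 * x + 2 * α + 2) / (N : ℝ) ^ (x + α + 1) := by
      have : (c : ℝ) * n = (n : ℝ) ^ (2 : ℝ) / N := by
        rw [eq_div_iff hN0.ne', Real.rpow_two]
        linear_combination (-(n : ℝ)) * hnN
      rw [this, Real.div_rpow (by positivity) hN0.le, ← Real.rpow_mul hn0.le]
      congr 2; ring
    have e2 : (N : ℝ) ^ (x + (n : ℝ) + α + 1) = (N : ℝ) ^ (x + α + 1) * (N : ℝ) ^ (n : ℝ) := by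
      rw [← Real.rpow_add hN0]; congr 1; ring
    have e3 : Real.exp (-(n : ℝ)) = (Real.exp n)⁻¹ := Real.exp_neg _
    have p1 : 0 < (N : ℝ) ^ (x + α + 1) := Real.rpow_pos_of_pos hN0 _
    have p2 : 0 < (N : ℝ) ^ (n : ℝ) := Real.rpow_pos_of_pos hN0 _
    have p3 : 0 < (1 + (c : ℝ)) ^ ((n : ℝ) + N + a - 1 / 2) := Real.rpow_pos_of_pos hc' _
    have p4 : 0 < (n : ℝ) ^ (2 * x + 2 * α + 2) := Real.rpow_pos_of_pos hn0 _
    have p5 : 0 < pochR ((N : ℝ) + a) n := pochR_pos (by linarith) n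
    have p6 : (0 : ℝ) < (N - 1).factorial := by positivity
    have p7 : (0 : ℝ) < (N - n - 1).factorial := by positivity
    have p8 : (0 : ℝ) < n.factorial := by positivity
    have p9 := Real.exp_pos (n : ℝ)
    have p10 := Real.pi_pos
    rw [g1, g2, e1, e2, e3]
    field_simp
  intro ε hε
  obtain ⟨n₀, h⟩ := eventually_rayFilter.mp (Metric.tendsto_nhds.mp hQR ε hε)
  exact ⟨n₀, fun n N hn hN => h n N hn (by exact_mod_cast hN)⟩
end
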